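/- arXiv:2403.14407 — 2 statements merged into one kernel-verified Lean document; each statement's English description precedes it below -/
import Mathlib

section
/- Let R > 0 and ε ∈ (0, 1/3], set δ := (25^{1/3}/2) ε² and A := δ ε^{1/2}/√2, and suppose δ ≤ ((98/9)(7−√41))^{1/3} R^{−2/3}. Let β ≥ (2/3)δ, and let τ' : (0,1) → ℝ be given by τ'(z) = −(1−A)/δ on (0,δ), τ'(z) = 0 on (δ,1−ε), and τ'(z) = −(A(1−ε)/ε)/z² on (1−ε,1). Then for every k > 0 and all functions w, T : [0,1] → ℝ with w four times continuously differentiable, T continuously differentiable, satisfying w''''(z) − 2k² w''(z) + k⁴ w(z) = R k² T(z) for all z ∈ [0,1], w(0) = w(1) = 0, w'(0) = w'(1) = 0, and T(0) = T(1) = 0, one has ∫₀¹ ( β T'(z)² + β k² T(z)² + τ'(z) w(z) T(z) ) dz ≥ 0. -/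
open MeasureTheory

open Set

/-!
Write `g = R T`, so that `(∂² - k²)² w = k² g`. Testing the equation with `w` bounds `w`, `w'` and
`w''` in mean square by `g`. To bound `w''` pointwise, use the first integral
`E = w''' w' - w''² / 2 - k² w'² + k⁴ w² / 2`, for which `E' = k² g w'`. At a maximum of `w''²` the
product `w''' w'` vanishes (unless `w'' = 0` throughout), so `w''² / 2 ≤ k⁴ w² / 2 - E` there. Since
`E` is close to its mean, which the mean square bounds control, this gives
`sup w''² ≤ (3/4 + 3/2 k) ∫ g²` on `[0, 1]`.

By Taylor's formula at a wall `c`, `w` is then `O(|z - c|²)`, while `T` is `O(|z - c|^{1/2})` by the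
Cauchy–Schwarz inequality; with Poincaré's inequality,
`|w T| ≤ (R / 2) |z - c|^{5/2} ∫ (T'² + k² T²)`. As `τ'` lives on the two layers only, integrating
this bound over them leaves one inequality between `R`, `δ`, `ε`, `A` and `β`.
-/

theorem intervalIntegral_sq_nonneg (f : ℝ → ℝ) {a b : ℝ} (hab : a ≤ b) :
    0 ≤ ∫ x in a..b, f x ^ 2 :=
  intervalIntegral.integral_nonneg hab fun _ _ => sq_nonneg _

theorem sq_intervalIntegral_mul_le {f g : ℝ → ℝ} {a b : ℝ} (hf : ContinuousOn f (uIcc a b))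
    (hg : ContinuousOn g (uIcc a b)) :
    (∫ x in a..b, f x * g x) ^ 2 ≤ (∫ x in a..b, f x ^ 2) * ∫ x in a..b, g x ^ 2 := by
  wlog hab : a ≤ b generalizing a b
  · simpa only [intervalIntegral.integral_symm b a, neg_sq, neg_mul_neg] using
      this (uIcc_comm a b ▸ hf) (uIcc_comm a b ▸ hg) (le_of_not_ge hab)
  have hff : IntervalIntegrable (fun x => f x ^ 2) volume a b := (hf.pow 2).intervalIntegrable
  have hfg : IntervalIntegrable (fun x => f x * g x) volume a b := (hf.mul hg).intervalIntegrable
  have hgg : IntervalIntegrable (fun x => g x ^ 2) volume a b := (hg.pow 2).intervalIntegrable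
  have quadratic_nonneg (t : ℝ) : 0 ≤ (∫ x in a..b, f x ^ 2) * (t * t) +
      (2 * ∫ x in a..b, f x * g x) * t + ∫ x in a..b, g x ^ 2 := by
    calc 0 ≤ ∫ x in a..b, (t * f x + g x) ^ 2 :=
          intervalIntegral.integral_nonneg hab fun x _ => sq_nonneg _
      _ = ∫ x in a..b, (t * t * f x ^ 2 + 2 * t * (f x * g x) + g x ^ 2) := by
          congr 1 with x; ring
      _ = _ := by
          rw [intervalIntegral.integral_add ((hff.const_mul _).add (hfg.const_mul _)) hgg,
            intervalIntegral.integral_add (hff.const_mul _) (hfg.const_mul _),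
            intervalIntegral.integral_const_mul, intervalIntegral.integral_const_mul]
          ring
  have := discrim_le_zero quadratic_nonneg
  rw [discrim] at this
  linarith

theorem intervalIntegral_mul_le_add {f g : ℝ → ℝ} {a b c : ℝ} (hab : a ≤ b)
    (hf : ContinuousOn f (Icc a b)) (hg : ContinuousOn g (Icc a b)) (hc : 0 < c) :
    ∫ x in a..b, f x * g x ≤
      c * (∫ x in a..b, f x ^ 2) + 1 / (4 * c) * ∫ x in a..b, g x ^ 2 := by
  have hi {u : ℝ → ℝ} (hu : ContinuousOn u (Icc a b)) : IntervalIntegrable u volume a b :=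
    hu.intervalIntegrable_of_Icc hab
  rw [← intervalIntegral.integral_const_mul, ← intervalIntegral.integral_const_mul,
    ← intervalIntegral.integral_add (hi (by fun_prop)) (hi (by fun_prop))]
  refine intervalIntegral.integral_mono_on hab (hi (by fun_prop)) (hi (by fun_prop)) fun x _ => ?_
  have young : 0 ≤ (2 * c * f x - g x) ^ 2 / (4 * c) := by positivity
  have expand : (2 * c * f x - g x) ^ 2 / (4 * c) =
      c * f x ^ 2 + 1 / (4 * c) * g x ^ 2 - f x * g x := by
    field_simp
    ring
  linarith

theorem abs_intervalIntegral_le_of_mem_Icc {f : ℝ → ℝ} {a b p q : ℝ}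
    (hf : ContinuousOn f (Icc a b)) (hp : p ∈ Icc a b) (hq : q ∈ Icc a b) :
    |∫ x in p..q, f x| ≤ ∫ x in a..b, |f x| := by
  have hab : a ≤ b := hp.1.trans hp.2
  calc |∫ x in p..q, f x| ≤ |(∫ x in p..q, |f x|)| :=
        intervalIntegral.norm_integral_le_abs_integral_norm (f := f) (μ := volume)
    _ ≤ |(∫ x in a..b, |f x|)| := by
        refine intervalIntegral.abs_integral_mono_interval ?_ (.of_forall fun x => abs_nonneg _)
          (hf.abs.intervalIntegrable_of_Icc hab)
        rw [uIoc_of_le hab]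
        exact Ioc_subset_Ioc (le_inf hp.1 hq.1) (sup_le hp.2 hq.2)
    _ = ∫ x in a..b, |f x| :=
        abs_of_nonneg (intervalIntegral.integral_nonneg hab fun x _ => abs_nonneg _)

theorem sq_le_two_mul_intervalIntegral_abs_mul_deriv {f : ℝ → ℝ} {a b c x : ℝ}
    (hf : ContDiff ℝ 1 f) (hc : c ∈ Icc a b) (hx : x ∈ Icc a b) (hfc : f c = 0) :
    f x ^ 2 ≤ 2 * ∫ y in a..b, |f y * deriv f y| := by
  have hf' : Continuous (deriv f) := hf.continuous_deriv_one
  have hcont : Continuous fun y => f y * deriv f y := hf.continuous.mul hf'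
  have key : ∫ y in c..x, f y * deriv f y = f x ^ 2 / 2 := by
    rw [intervalIntegral.integral_eq_sub_of_hasDerivAt (f := fun y => f y ^ 2 / 2) (fun y _ => ?_)
      (hcont.intervalIntegrable _ _), hfc]
    · ring
    · exact ((((hf.differentiable one_ne_zero y).hasDerivAt).fun_pow 2).div_const 2).congr_deriv
        (by push_cast; ring)
  have := abs_intervalIntegral_le_of_mem_Icc hcont.continuousOn hc hx
  rw [key] at this
  linarith [le_abs_self (f x ^ 2 / 2)]

theorem sq_le_abs_sub_mul_intervalIntegral_deriv_sq {f : ℝ → ℝ} {a b c x : ℝ}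
    (hf : ContDiff ℝ 1 f) (hc : c ∈ Icc a b) (hx : x ∈ Icc a b) (hfc : f c = 0) :
    f x ^ 2 ≤ |x - c| * ∫ y in a..b, deriv f y ^ 2 := by
  have hf' : Continuous (deriv f) := hf.continuous_deriv_one
  have hfx : ∫ y in c..x, 1 * deriv f y = f x := by
    simp only [one_mul]
    rw [intervalIntegral.integral_deriv_eq_sub (fun y _ => hf.differentiable one_ne_zero y)
      (hf'.intervalIntegrable _ _), hfc, sub_zero]
  calc f x ^ 2 ≤ (∫ _ in c..x, (1 : ℝ) ^ 2) * ∫ y in c..x, deriv f y ^ 2 := by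
        rw [← hfx]
        exact sq_intervalIntegral_mul_le continuousOn_const hf'.continuousOn
    _ ≤ |x - c| * |∫ y in c..x, deriv f y ^ 2| := by
        rw [← abs_mul]
        simpa using le_abs_self ((x - c) * ∫ y in c..x, deriv f y ^ 2)
    _ ≤ |x - c| * ∫ y in a..b, |deriv f y ^ 2| := by
        gcongr
        exact abs_intervalIntegral_le_of_mem_Icc (hf'.pow 2).continuousOn hc hx
    _ = |x - c| * ∫ y in a..b, deriv f y ^ 2 := by simp only [abs_sq]

theorem intervalIntegral_sq_le_mul_intervalIntegral_deriv_sq {f : ℝ → ℝ} {a b : ℝ} (hab : a ≤ b)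
    (hf : ContDiff ℝ 1 f) (hfa : f a = 0) :
    ∫ x in a..b, f x ^ 2 ≤ (b - a) ^ 2 / 2 * ∫ x in a..b, deriv f x ^ 2 := by
  calc ∫ x in a..b, f x ^ 2 ≤ ∫ x in a..b, (x - a) * ∫ y in a..b, deriv f y ^ 2 := by
        refine intervalIntegral.integral_mono_on hab ((hf.continuous.pow 2).intervalIntegrable _ _)
          (Continuous.intervalIntegrable (by fun_prop) _ _) fun x hx => ?_
        simpa only [abs_of_nonneg (sub_nonneg.2 hx.1)] using
          sq_le_abs_sub_mul_intervalIntegral_deriv_sq hf (left_mem_Icc.2 hab) hx hfa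
    _ = (b - a) ^ 2 / 2 * ∫ x in a..b, deriv f x ^ 2 := by
        rw [intervalIntegral.integral_mul_const,
          intervalIntegral.integral_comp_sub_right (fun x => x), integral_id]
        ring

theorem abs_le_mul_sq_of_deriv_eq_zero {f : ℝ → ℝ} {a b c x M : ℝ} (hf : ContDiff ℝ 2 f)
    (hM : ∀ y ∈ Icc a b, |iteratedDeriv 2 f y| ≤ M) (hc : c ∈ Icc a b) (hx : x ∈ Icc a b)
    (hfc : f c = 0) (hfc' : deriv f c = 0) : |f x| ≤ M / 2 * |x - c| ^ 2 := by
  rcases eq_or_ne c x with rfl | hcx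
  · simp [hfc]
  obtain ⟨ξ, hξ, taylor⟩ :=
    taylor_mean_remainder_lagrange_iteratedDeriv (n := 1) hcx (by exact_mod_cast hf.contDiffOn)
  have hderiv : derivWithin f (uIcc c x) c = 0 := by
    rw [(hf.differentiable two_ne_zero c).derivWithin (uniqueDiffOn_uIcc hcx c left_mem_uIcc), hfc']
  have hfx : f x = iteratedDeriv 2 f ξ / 2 * (x - c) ^ 2 := by
    simp only [taylorWithinEval_succ, taylor_within_zero_eval, iteratedDerivWithin_one, hfc, hderiv,
      smul_zero, add_zero, sub_zero, Nat.reduceAdd, Nat.factorial_two, Nat.cast_ofNat] at taylor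
    rw [taylor]
    ring
  rw [hfx, abs_mul, abs_div, abs_two, abs_pow]
  gcongr
  exact hM ξ (uIcc_subset_Icc hc hx (Ioo_subset_Icc_self hξ))

theorem exists_isMaxOn_Icc_endpoint_or_deriv_eq_zero {f : ℝ → ℝ} {a b : ℝ} (hab : a ≤ b)
    (hf : ContinuousOn f (Icc a b)) :
    ∃ m ∈ Icc a b, IsMaxOn f (Icc a b) m ∧ (m = a ∨ m = b ∨ deriv f m = 0) := by
  obtain ⟨m, hm, hmax⟩ := isCompact_Icc.exists_isMaxOn (nonempty_Icc.2 hab) hf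
  refine ⟨m, hm, hmax, ?_⟩
  rcases eq_endpoints_or_mem_Ioo_of_mem_Icc hm with ha | hb | hint
  · exact .inl ha
  · exact .inr (.inl hb)
  · exact .inr (.inr (hmax.isLocalMax (Icc_mem_nhds hint.1 hint.2)).deriv_eq_zero)

theorem abs_intervalIntegral_le_of_abs_le_rpow_sub_left {f : ℝ → ℝ} {a b C p : ℝ} (hab : a ≤ b)
    (hp : -1 < p) (hf : ∀ x ∈ Ioo a b, |f x| ≤ C * (x - a) ^ p) :
    |∫ x in a..b, f x| ≤ C / (p + 1) * (b - a) ^ (p + 1) := by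
  have hbound : ∀ᵐ x, x ∈ Ioc a b → ‖f x‖ ≤ C * (x - a) ^ p := by
    filter_upwards [Measure.ae_ne volume b] with x hxb hx
    exact hf x ⟨hx.1, hx.2.lt_of_ne hxb⟩
  have hint : IntervalIntegrable (fun x => (x - a) ^ p) volume a b := by
    simpa using
      (intervalIntegral.intervalIntegrable_rpow' (a := 0) (b := b - a) hp).comp_sub_right a
  calc |∫ x in a..b, f x| ≤ ∫ x in a..b, C * (x - a) ^ p :=
        intervalIntegral.norm_integral_le_of_norm_le hab hbound (hint.const_mul C)
    _ = C / (p + 1) * (b - a) ^ (p + 1) := by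
        rw [intervalIntegral.integral_const_mul,
          intervalIntegral.integral_comp_sub_right (fun x => x ^ p), integral_rpow (.inl hp),
          sub_self, Real.zero_rpow (by linarith)]
        ring

theorem abs_intervalIntegral_le_of_abs_le_rpow_sub_right {f : ℝ → ℝ} {a b C p : ℝ} (hab : a ≤ b)
    (hp : -1 < p) (hf : ∀ x ∈ Ioo a b, |f x| ≤ C * (b - x) ^ p) :
    |∫ x in a..b, f x| ≤ C / (p + 1) * (b - a) ^ (p + 1) := by
  have reflected : ∫ x in a..b, f x = ∫ x in a..b, f (a + b - x) := by
    rw [intervalIntegral.integral_comp_sub_left]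
    simp
  rw [reflected]
  refine abs_intervalIntegral_le_of_abs_le_rpow_sub_left hab hp fun x hx => ?_
  convert hf (a + b - x) ⟨by linarith [hx.2], by linarith [hx.1]⟩ using 3
  ring

/-! ### The clamped boundary value problem -/

/-- The function `w` solves the boundary value problem `(∂² - k²)² w = k² g` on `[a, b]` with
impermeable no-slip walls, `w = w' = 0` at `a` and `b`. The forcing carries the factor `k²`, so that
the velocity driven by a temperature `T` at Rayleigh number `R` has `g = R T`. -/
structure IsClampedSolution (a b k : ℝ) (w g : ℝ → ℝ) : Prop where
  contDiff : ContDiff ℝ 4 w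
  continuousOn : ContinuousOn g (Icc a b)
  ode : ∀ z ∈ Icc a b,
    iteratedDeriv 4 w z - 2 * k ^ 2 * iteratedDeriv 2 w z + k ^ 4 * w z = k ^ 2 * g z
  left : w a = 0
  right : w b = 0
  deriv_left : deriv w a = 0
  deriv_right : deriv w b = 0

namespace IsClampedSolution

/-- The quantity conserved by the unforced equation `(∂² - k²)² w = 0`; under the forcing `k² g` its
derivative is `k² g w'`. It controls `w''` wherever `w''' w'` vanishes. -/
noncomputable def firstIntegral (k : ℝ) (w : ℝ → ℝ) (z : ℝ) : ℝ :=
  iteratedDeriv 3 w z * deriv w z - iteratedDeriv 2 w z ^ 2 / 2 - k ^ 2 * deriv w z ^ 2 +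
    k ^ 4 / 2 * w z ^ 2

variable {a b k : ℝ} {w g : ℝ → ℝ} (h : IsClampedSolution a b k w g)
include h

theorem contDiff_one : ContDiff ℝ 1 w := h.contDiff.of_le (by norm_num)

theorem continuous_deriv : Continuous (deriv w) := h.contDiff_one.continuous_deriv_one

theorem continuous_iteratedDeriv {n : ℕ} (hn : n ≤ 4) : Continuous (iteratedDeriv n w) :=
  h.contDiff.continuous_iteratedDeriv n (by exact_mod_cast hn)

theorem hasDerivAt (z : ℝ) : HasDerivAt w (deriv w z) z :=
  (h.contDiff.differentiable (by norm_num) z).hasDerivAt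

theorem hasDerivAt_iteratedDeriv {n : ℕ} (hn : n < 4) (z : ℝ) :
    HasDerivAt (iteratedDeriv n w) (iteratedDeriv (n + 1) w z) z := by
  rw [iteratedDeriv_succ]
  exact (h.contDiff.differentiable_iteratedDeriv n (by exact_mod_cast hn) z).hasDerivAt

theorem hasDerivAt_deriv (z : ℝ) : HasDerivAt (deriv w) (iteratedDeriv 2 w z) z := by
  simpa only [iteratedDeriv_one] using h.hasDerivAt_iteratedDeriv (n := 1) (by norm_num) z

theorem energy_identity (hab : a ≤ b) :
    (∫ z in a..b, iteratedDeriv 2 w z ^ 2) + 2 * k ^ 2 * (∫ z in a..b, deriv w z ^ 2) +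
      k ^ 4 * (∫ z in a..b, w z ^ 2) = k ^ 2 * ∫ z in a..b, w z * g z := by
  have hw := h.contDiff.continuous
  have hw₁ := h.continuous_deriv
  have hw₂ := h.continuous_iteratedDeriv (n := 2) (by norm_num)
  have hi {f : ℝ → ℝ} (hf : ContinuousOn f (Icc a b)) : IntervalIntegrable f volume a b :=
    hf.intervalIntegrable_of_Icc hab
  have hg := h.continuousOn
  have boundary_terms : ∫ z in a..b, (k ^ 2 * (w z * g z) - (iteratedDeriv 2 w z ^ 2 +
      2 * k ^ 2 * deriv w z ^ 2 + k ^ 4 * w z ^ 2)) = 0 := by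
    rw [intervalIntegral.integral_eq_sub_of_hasDerivAt
      (f := fun z => iteratedDeriv 3 w z * w z - iteratedDeriv 2 w z * deriv w z -
        2 * k ^ 2 * (deriv w z * w z)) (fun z hz => ?_) (hi (by fun_prop))]
    · simp only [h.left, h.right, h.deriv_left, h.deriv_right, mul_zero, sub_zero]
    · rw [uIcc_of_le hab] at hz
      refine ((((h.hasDerivAt_iteratedDeriv (by norm_num) z).fun_mul (h.hasDerivAt z)).fun_sub
        ((h.hasDerivAt_iteratedDeriv (by norm_num) z).fun_mul (h.hasDerivAt_deriv z))).fun_sub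
        (((h.hasDerivAt_deriv z).fun_mul (h.hasDerivAt z)).const_mul (2 * k ^ 2))).congr_deriv ?_
      linear_combination w z * h.ode z hz
  rw [intervalIntegral.integral_sub (hi (by fun_prop)) (hi (by fun_prop)),
    intervalIntegral.integral_add (hi (by fun_prop)) (hi (by fun_prop)),
    intervalIntegral.integral_add (hi (by fun_prop)) (hi (by fun_prop)),
    intervalIntegral.integral_const_mul, intervalIntegral.integral_const_mul,
    intervalIntegral.integral_const_mul] at boundary_terms
  linarith

theorem mul_integral_mul_le (hab : a ≤ b) {c : ℝ} (hc : 0 < c) :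
    k ^ 2 * (∫ z in a..b, w z * g z) ≤
      c * k ^ 4 * (∫ z in a..b, w z ^ 2) + 1 / (4 * c) * ∫ z in a..b, g z ^ 2 := by
  have young := intervalIntegral_mul_le_add (f := fun z => k ^ 2 * w z) hab
    (h.contDiff.continuous.const_mul _).continuousOn h.continuousOn hc
  simp only [mul_pow, mul_assoc, intervalIntegral.integral_const_mul] at young
  linarith

theorem integral_sq_iteratedDeriv_two_add_le (hab : a ≤ b) :
    (∫ z in a..b, iteratedDeriv 2 w z ^ 2) + 2 * k ^ 2 * (∫ z in a..b, deriv w z ^ 2) ≤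
      1 / 4 * ∫ z in a..b, g z ^ 2 := by
  linarith [h.energy_identity hab, h.mul_integral_mul_le hab one_pos]

theorem mul_integral_sq_deriv_le (hab : a ≤ b) :
    k ^ 2 * (∫ z in a..b, deriv w z ^ 2) ≤ 1 / 8 * ∫ z in a..b, g z ^ 2 := by
  have : 0 ≤ ∫ z in a..b, iteratedDeriv 2 w z ^ 2 :=
    intervalIntegral_sq_nonneg _ hab
  linarith [h.integral_sq_iteratedDeriv_two_add_le hab]

theorem mul_integral_sq_le (hab : a ≤ b) :
    k ^ 4 * (∫ z in a..b, w z ^ 2) ≤ ∫ z in a..b, g z ^ 2 := by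
  have hw₁ : 0 ≤ ∫ z in a..b, deriv w z ^ 2 :=
    intervalIntegral_sq_nonneg _ hab
  have hw₂ : 0 ≤ ∫ z in a..b, iteratedDeriv 2 w z ^ 2 :=
    intervalIntegral_sq_nonneg _ hab
  have : 0 ≤ 2 * k ^ 2 * ∫ z in a..b, deriv w z ^ 2 := by positivity
  linarith [h.energy_identity hab, h.mul_integral_mul_le hab one_half_pos]

-- The argument gives the constant `1 / √8`; `3 / 8` is a rational upper bound for it.
theorem mul_integral_abs_mul_deriv_le (hab : a ≤ b) {f : ℝ → ℝ}
    (hf : ContinuousOn f (Icc a b)) :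
    |k| * (∫ z in a..b, |f z * deriv w z|) ≤
      3 / 8 * (√(∫ z in a..b, f z ^ 2) * √(∫ z in a..b, g z ^ 2)) := by
  have hf₀ : 0 ≤ ∫ z in a..b, f z ^ 2 := intervalIntegral_sq_nonneg _ hab
  have hg₀ : 0 ≤ ∫ z in a..b, g z ^ 2 := intervalIntegral_sq_nonneg _ hab
  have cauchy_schwarz : (∫ z in a..b, |f z * deriv w z|) ^ 2 ≤
      (∫ z in a..b, f z ^ 2) * ∫ z in a..b, deriv w z ^ 2 := by
    simpa only [abs_mul, sq_abs] using sq_intervalIntegral_mul_le (f := fun z => |f z|)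
      (uIcc_of_le hab ▸ hf.abs) h.continuous_deriv.abs.continuousOn
  refine abs_le_of_sq_le_sq' (?_ : _ ^ 2 ≤ _ ^ 2) (by positivity) |>.2
  calc (|k| * ∫ z in a..b, |f z * deriv w z|) ^ 2
      = k ^ 2 * (∫ z in a..b, |f z * deriv w z|) ^ 2 := by rw [mul_pow, sq_abs]
    _ ≤ k ^ 2 * ((∫ z in a..b, f z ^ 2) * ∫ z in a..b, deriv w z ^ 2) := by gcongr
    _ = (∫ z in a..b, f z ^ 2) * (k ^ 2 * ∫ z in a..b, deriv w z ^ 2) := by ring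
    _ ≤ (∫ z in a..b, f z ^ 2) * (9 / 64 * ∫ z in a..b, g z ^ 2) := by
        refine mul_le_mul_of_nonneg_left ?_ hf₀
        linarith [h.mul_integral_sq_deriv_le hab]
    _ = (3 / 8 * (√(∫ z in a..b, f z ^ 2) * √(∫ z in a..b, g z ^ 2))) ^ 2 := by
        rw [mul_pow, mul_pow, Real.sq_sqrt hf₀, Real.sq_sqrt hg₀]
        ring

theorem mul_integral_abs_forcing_mul_deriv_le (hab : a ≤ b) :
    k ^ 2 * (∫ z in a..b, |g z * deriv w z|) ≤ 3 / 8 * |k| * ∫ z in a..b, g z ^ 2 := by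
  have hg₀ : 0 ≤ ∫ z in a..b, g z ^ 2 := intervalIntegral_sq_nonneg _ hab
  have := h.mul_integral_abs_mul_deriv_le hab h.continuousOn
  rw [Real.mul_self_sqrt hg₀] at this
  calc k ^ 2 * (∫ z in a..b, |g z * deriv w z|)
      = |k| * (|k| * ∫ z in a..b, |g z * deriv w z|) := by rw [← sq_abs k]; ring
    _ ≤ |k| * (3 / 8 * ∫ z in a..b, g z ^ 2) := by gcongr
    _ = _ := by ring

theorem mul_integral_abs_self_mul_deriv_le (hab : a ≤ b) :
    k ^ 4 * (∫ z in a..b, |w z * deriv w z|) ≤ 3 / 8 * |k| * ∫ z in a..b, g z ^ 2 := by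
  have hg₀ : 0 ≤ ∫ z in a..b, g z ^ 2 := intervalIntegral_sq_nonneg _ hab
  have sqrt_le : k ^ 2 * √(∫ z in a..b, w z ^ 2) ≤ √(∫ z in a..b, g z ^ 2) := by
    refine Real.le_sqrt_of_sq_le ?_
    rw [mul_pow, Real.sq_sqrt (intervalIntegral_sq_nonneg _ hab)]
    linarith [h.mul_integral_sq_le hab]
  have := h.mul_integral_abs_mul_deriv_le hab h.contDiff.continuous.continuousOn
  calc k ^ 4 * (∫ z in a..b, |w z * deriv w z|)
      = |k| * k ^ 2 * (|k| * ∫ z in a..b, |w z * deriv w z|) := by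
        rw [show k ^ 4 = |k| ^ 4 by rw [pow_abs, abs_of_nonneg (by positivity)], ← sq_abs k]
        ring
    _ ≤ |k| * k ^ 2 * (3 / 8 * (√(∫ z in a..b, w z ^ 2) * √(∫ z in a..b, g z ^ 2))) := by gcongr
    _ = 3 / 8 * |k| * (k ^ 2 * √(∫ z in a..b, w z ^ 2)) * √(∫ z in a..b, g z ^ 2) := by ring
    _ ≤ 3 / 8 * |k| * √(∫ z in a..b, g z ^ 2) * √(∫ z in a..b, g z ^ 2) := by gcongr
    _ = 3 / 8 * |k| * ∫ z in a..b, g z ^ 2 := by rw [mul_assoc, Real.mul_self_sqrt hg₀]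

theorem hasDerivAt_firstIntegral {z : ℝ} (hz : z ∈ Icc a b) :
    HasDerivAt (firstIntegral k w) (k ^ 2 * (g z * deriv w z)) z := by
  refine (((((h.hasDerivAt_iteratedDeriv (by norm_num) z).fun_mul (h.hasDerivAt_deriv z)).fun_sub
    (((h.hasDerivAt_iteratedDeriv (by norm_num) z).fun_pow 2).div_const 2)).fun_sub
    (((h.hasDerivAt_deriv z).fun_pow 2).const_mul (k ^ 2))).fun_add
    (((h.hasDerivAt z).fun_pow 2).const_mul (k ^ 4 / 2))).congr_deriv ?_
  push_cast
  linear_combination deriv w z * h.ode z hz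

theorem firstIntegral_sub_le {p q : ℝ} (hp : p ∈ Icc a b) (hq : q ∈ Icc a b) :
    firstIntegral k w q - firstIntegral k w p ≤ k ^ 2 * ∫ z in a..b, |g z * deriv w z| := by
  have hint : ContinuousOn (fun z => g z * deriv w z) (Icc a b) :=
    h.continuousOn.mul h.continuous_deriv.continuousOn
  have hpq : uIcc p q ⊆ Icc a b := uIcc_subset_Icc hp hq
  rw [← intervalIntegral.integral_eq_sub_of_hasDerivAt
    (fun z hz => h.hasDerivAt_firstIntegral (hpq hz))
    ((hint.mono hpq).intervalIntegrable.const_mul _), intervalIntegral.integral_const_mul]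
  gcongr
  exact (le_abs_self _).trans (abs_intervalIntegral_le_of_mem_Icc hint hp hq)

theorem integral_firstIntegral :
    ∫ z in a..b, firstIntegral k w z =
      -(3 / 2) * (∫ z in a..b, iteratedDeriv 2 w z ^ 2) - k ^ 2 * (∫ z in a..b, deriv w z ^ 2) +
        k ^ 4 / 2 * ∫ z in a..b, w z ^ 2 := by
  have hw := h.contDiff.continuous
  have hw₁ := h.continuous_deriv
  have hw₂ := h.continuous_iteratedDeriv (n := 2) (by norm_num)
  have hw₃ := h.continuous_iteratedDeriv (n := 3) (by norm_num)
  have hi {f : ℝ → ℝ} (hf : Continuous f) : IntervalIntegrable f volume a b :=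
    hf.intervalIntegrable a b
  have by_parts : ∫ z in a..b, iteratedDeriv 3 w z * deriv w z =
      -∫ z in a..b, iteratedDeriv 2 w z ^ 2 := by
    have := intervalIntegral.integral_mul_deriv_eq_deriv_mul (fun z _ => h.hasDerivAt_deriv z)
      (fun z _ => h.hasDerivAt_iteratedDeriv (n := 2) (by norm_num) z) (hi hw₂) (hi hw₃)
    simpa only [h.deriv_left, h.deriv_right, zero_mul, sub_zero, zero_sub, sq,
      mul_comm (deriv w _)] using this
  unfold firstIntegral
  rw [intervalIntegral.integral_add (hi (by fun_prop)) (hi (by fun_prop)),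
    intervalIntegral.integral_sub (hi (by fun_prop)) (hi (by fun_prop)),
    intervalIntegral.integral_sub (hi (by fun_prop)) (hi (by fun_prop)), by_parts,
    intervalIntegral.integral_div, intervalIntegral.integral_const_mul,
    intervalIntegral.integral_const_mul]
  ring

theorem integral_firstIntegral_le {z : ℝ} (hz : z ∈ Icc a b) :
    ∫ y in a..b, firstIntegral k w y ≤
      (b - a) * (firstIntegral k w z + k ^ 2 * ∫ y in a..b, |g y * deriv w y|) := by
  have hab : a ≤ b := hz.1.trans hz.2
  have hcont : ContinuousOn (firstIntegral k w) (Icc a b) :=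
    fun y hy => (h.hasDerivAt_firstIntegral hy).continuousAt.continuousWithinAt
  calc ∫ y in a..b, firstIntegral k w y
      ≤ ∫ _ in a..b, (firstIntegral k w z + k ^ 2 * ∫ y in a..b, |g y * deriv w y|) := by
        refine intervalIntegral.integral_mono_on hab (hcont.intervalIntegrable_of_Icc hab)
          intervalIntegrable_const fun y hy => ?_
        linarith [h.firstIntegral_sub_le hz hy]
    _ = _ := by rw [intervalIntegral.integral_const, smul_eq_mul]

theorem mul_sq_iteratedDeriv_two_le_of_mul_eq_zero {z : ℝ} (hz : z ∈ Icc a b)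
    (hcrit : iteratedDeriv 3 w z * deriv w z = 0) :
    (b - a) * iteratedDeriv 2 w z ^ 2 ≤ (3 / 4 + 3 / 2 * |k| * (b - a)) * ∫ y in a..b, g y ^ 2 := by
  have hab : a ≤ b := hz.1.trans hz.2
  have hba : 0 ≤ b - a := sub_nonneg.2 hab
  have hw₀ : 0 ≤ k ^ 4 * ∫ y in a..b, w y ^ 2 :=
    mul_nonneg (by positivity) (intervalIntegral_sq_nonneg _ hab)
  have hw₁ : 0 ≤ k ^ 2 * ∫ y in a..b, deriv w y ^ 2 :=
    mul_nonneg (by positivity) (intervalIntegral_sq_nonneg _ hab)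
  have hwz : k ^ 4 * w z ^ 2 ≤ 2 * (3 / 8 * |k| * ∫ y in a..b, g y ^ 2) := by
    have := sq_le_two_mul_intervalIntegral_abs_mul_deriv h.contDiff_one (left_mem_Icc.2 hab) hz
      h.left
    have := mul_le_mul_of_nonneg_left this (by positivity : 0 ≤ k ^ 4)
    linarith [h.mul_integral_abs_self_mul_deriv_le hab]
  have hforcing := h.mul_integral_abs_forcing_mul_deriv_le hab
  have hmean := h.integral_firstIntegral_le hz
  rw [h.integral_firstIntegral] at hmean
  have hEz : firstIntegral k w z + k ^ 2 * ∫ y in a..b, |g y * deriv w y| ≤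
      -(iteratedDeriv 2 w z ^ 2 / 2) + 3 / 4 * |k| * ∫ y in a..b, g y ^ 2 := by
    have : 0 ≤ k ^ 2 * deriv w z ^ 2 := by positivity
    rw [firstIntegral, hcrit]
    linarith
  have := hmean.trans (mul_le_mul_of_nonneg_left hEz hba)
  linarith [h.integral_sq_iteratedDeriv_two_add_le hab]

theorem mul_sq_iteratedDeriv_two_le {z : ℝ} (hz : z ∈ Icc a b) :
    (b - a) * iteratedDeriv 2 w z ^ 2 ≤ (3 / 4 + 3 / 2 * |k| * (b - a)) * ∫ y in a..b, g y ^ 2 := by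
  have hab : a ≤ b := hz.1.trans hz.2
  have hba : 0 ≤ b - a := sub_nonneg.2 hab
  obtain ⟨m, hm, hmax, hcrit⟩ := exists_isMaxOn_Icc_endpoint_or_deriv_eq_zero
    (f := fun y => iteratedDeriv 2 w y ^ 2) hab
    ((h.continuous_iteratedDeriv (by norm_num)).pow 2).continuousOn
  refine (mul_le_mul_of_nonneg_left (hmax hz) hba).trans ?_
  rcases hcrit with rfl | rfl | hcrit
  · exact h.mul_sq_iteratedDeriv_two_le_of_mul_eq_zero hm (by rw [h.deriv_left, mul_zero])
  · exact h.mul_sq_iteratedDeriv_two_le_of_mul_eq_zero hm (by rw [h.deriv_right, mul_zero])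
  · have hprod : iteratedDeriv 2 w m * iteratedDeriv 3 w m = 0 := by
      rw [((h.hasDerivAt_iteratedDeriv (by norm_num) m).fun_pow 2).deriv] at hcrit
      push_cast at hcrit
      linarith
    rcases mul_eq_zero.1 hprod with hw₂ | hw₃
    · have := intervalIntegral_sq_nonneg g hab
      beta_reduce
      rw [hw₂, zero_pow two_ne_zero, mul_zero]
      positivity
    · exact h.mul_sq_iteratedDeriv_two_le_of_mul_eq_zero hm (by rw [hw₃, zero_mul])

end IsClampedSolution

/-! ### The spectral constraint -/

/-- The thermal dissipation on `[0, 1]` of a temperature mode `T` of horizontal wavenumber `k`. -/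
noncomputable def thermalDissipation (k : ℝ) (T : ℝ → ℝ) : ℝ :=
  ∫ z in 0..1, (deriv T z ^ 2 + k ^ 2 * T z ^ 2)

theorem thermalDissipation_nonneg (k : ℝ) (T : ℝ → ℝ) : 0 ≤ thermalDissipation k T :=
  intervalIntegral.integral_nonneg zero_le_one fun _ _ => by positivity

theorem thermalDissipation_eq_add {T : ℝ → ℝ} (hT : ContDiff ℝ 1 T) (k : ℝ) :
    thermalDissipation k T = (∫ z in 0..1, deriv T z ^ 2) + k ^ 2 * ∫ z in 0..1, T z ^ 2 := by
  rw [thermalDissipation, intervalIntegral.integral_add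
      (Continuous.intervalIntegrable (by fun_prop) _ _)
      (Continuous.intervalIntegrable (by fun_prop) _ _),
    intervalIntegral.integral_const_mul]

theorem sqrt_mul_sqrt_le_mul_add {R k N P : ℝ} (hR : 0 ≤ R) (hN : 0 ≤ N) (hNP : N ≤ P / 2) :
    √((3 / 4 + 3 / 2 * |k|) * (R ^ 2 * N)) * √P ≤ R * (P + k ^ 2 * N) := by
  have hP : 0 ≤ P := by linarith
  rw [← Real.sqrt_mul (by positivity)]
  refine Real.sqrt_le_iff.2 ⟨by positivity, ?_⟩
  have hk : 3 / 4 + 3 / 2 * |k| ≤ 3 / 2 + 3 / 4 * k ^ 2 := by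
    linarith [sq_nonneg (|k| - 1), sq_abs k]
  calc (3 / 4 + 3 / 2 * |k|) * (R ^ 2 * N) * P
      ≤ (3 / 2 + 3 / 4 * k ^ 2) * (R ^ 2 * N) * P := by gcongr
    _ = R ^ 2 * (3 / 2 * P * N + 3 / 4 * P * (k ^ 2 * N)) := by ring
    _ ≤ R ^ 2 * (3 / 2 * P * (P / 2) + 2 * P * (k ^ 2 * N)) := by gcongr; norm_num
    _ ≤ (R * (P + k ^ 2 * N)) ^ 2 := by
        have : 0 ≤ R ^ 2 * (P ^ 2 / 4 + (k ^ 2 * N) ^ 2) := by positivity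
        linarith

namespace IsClampedSolution

variable {R k : ℝ} {w T : ℝ → ℝ}

theorem abs_mul_le_thermalDissipation (h : IsClampedSolution 0 1 k w (fun z => R * T z))
    (hR : 0 ≤ R) (hT : ContDiff ℝ 1 T) (hT₀ : T 0 = 0) {c z : ℝ} (hc : c ∈ Icc 0 1)
    (hz : z ∈ Icc 0 1) (hwc : w c = 0) (hwc' : deriv w c = 0) (hTc : T c = 0) :
    |w z * T z| ≤ R / 2 * thermalDissipation k T * |z - c| ^ (5 / 2 : ℝ) := by
  set N := ∫ y in 0..1, T y ^ 2
  set P := ∫ y in 0..1, deriv T y ^ 2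
  set M := √((3 / 4 + 3 / 2 * |k|) * (R ^ 2 * N))
  have hw₂ : ∀ y ∈ Icc 0 1, |iteratedDeriv 2 w y| ≤ M := fun y hy => by
    have := h.mul_sq_iteratedDeriv_two_le hy
    simp only [sub_zero, one_mul, mul_one, mul_pow, intervalIntegral.integral_const_mul] at this
    exact Real.abs_le_sqrt this
  have hwz : |w z| ≤ M / 2 * |z - c| ^ 2 :=
    abs_le_mul_sq_of_deriv_eq_zero (h.contDiff.of_le (by norm_num)) hw₂ hc hz hwc hwc'
  have hTz : |T z| ≤ √|z - c| * √P := by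
    rw [← Real.sqrt_mul (abs_nonneg _)]
    exact Real.abs_le_sqrt (sq_le_abs_sub_mul_intervalIntegral_deriv_sq hT hc hz hTc)
  have poincare : N ≤ P / 2 := by
    linarith [intervalIntegral_sq_le_mul_intervalIntegral_deriv_sq zero_le_one hT hT₀]
  have hMP : M * √P ≤ R * thermalDissipation k T := by
    rw [thermalDissipation_eq_add hT]
    exact sqrt_mul_sqrt_le_mul_add hR (intervalIntegral_sq_nonneg _ zero_le_one) poincare
  have hpow : |z - c| ^ (5 / 2 : ℝ) = |z - c| ^ 2 * √|z - c| := by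
    rw [Real.sqrt_eq_rpow, ← Real.rpow_natCast, ← Real.rpow_add_of_nonneg] <;> norm_num
  calc |w z * T z| ≤ M / 2 * |z - c| ^ 2 * (√|z - c| * √P) := by
        rw [abs_mul]
        gcongr
    _ = M * √P / 2 * |z - c| ^ (5 / 2 : ℝ) := by
        rw [hpow]
        ring
    _ ≤ R * thermalDissipation k T / 2 * |z - c| ^ (5 / 2 : ℝ) := by gcongr
    _ = R / 2 * thermalDissipation k T * |z - c| ^ (5 / 2 : ℝ) := by ring

end IsClampedSolution

/-- The function `τ'` is the derivative, away from the kinks, of the no-slip background profile with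
bulk amplitude `A`, bottom layer `[0, δ]` and top layer `[1 - ε, 1]`. Its values outside the three
open layers are left free. -/
structure IsNoSlipProfileDeriv (A δ ε : ℝ) (τ' : ℝ → ℝ) : Prop where
  bottom : ∀ z ∈ Ioo 0 δ, τ' z = -(1 - A) / δ
  bulk : ∀ z ∈ Ioo δ (1 - ε), τ' z = 0
  top : ∀ z ∈ Ioo (1 - ε) 1, τ' z = -(A * (1 - ε) / ε) / z ^ 2

namespace IsNoSlipProfileDeriv

variable {A δ ε : ℝ} {τ' : ℝ → ℝ}

theorem intervalIntegrable_bottom (hτ : IsNoSlipProfileDeriv A δ ε τ') (hδ : 0 ≤ δ) :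
    IntervalIntegrable τ' volume 0 δ :=
  (intervalIntegrable_const (c := -(1 - A) / δ)).congr_uIoo fun z hz =>
    (hτ.bottom z (uIoo_of_le hδ ▸ hz)).symm

theorem intervalIntegrable_bulk (hτ : IsNoSlipProfileDeriv A δ ε τ') (hδε : δ ≤ 1 - ε) :
    IntervalIntegrable τ' volume δ (1 - ε) :=
  (intervalIntegrable_const (c := (0 : ℝ))).congr_uIoo fun z hz =>
    (hτ.bulk z (uIoo_of_le hδε ▸ hz)).symm

theorem intervalIntegrable_top (hτ : IsNoSlipProfileDeriv A δ ε τ') (hε₀ : 0 ≤ ε) (hε₁ : ε < 1) :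
    IntervalIntegrable τ' volume (1 - ε) 1 := by
  have hle : 1 - ε ≤ 1 := by linarith
  refine IntervalIntegrable.congr_uIoo (f := fun z => -(A * (1 - ε) / ε) / z ^ 2) ?_ fun z hz =>
    (hτ.top z (uIoo_of_le hle ▸ hz)).symm
  refine ContinuousOn.intervalIntegrable_of_Icc hle (continuousOn_const.div (by fun_prop) ?_)
  intro z hz
  have : 0 < z := by linarith [hz.1]
  positivity

theorem abs_top_le (hτ : IsNoSlipProfileDeriv A δ ε τ') (hA : 0 ≤ A) (hε₀ : 0 < ε) (hε₁ : ε < 1)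
    {z : ℝ} (hz : z ∈ Ioo (1 - ε) 1) : |τ' z| ≤ A / (ε * (1 - ε)) := by
  have hε : 0 < 1 - ε := by linarith
  calc |τ' z| = A * (1 - ε) / ε / z ^ 2 := by
        rw [hτ.top z hz, neg_div, abs_neg, abs_of_nonneg (by positivity)]
    _ ≤ A * (1 - ε) / ε / (1 - ε) ^ 2 := by
        gcongr
        exact hz.1.le
    _ = A / (ε * (1 - ε)) := by field_simp

theorem abs_integral_bottom_le (hτ : IsNoSlipProfileDeriv A δ ε τ') (hδ : 0 < δ) (hA : A ≤ 1)
    {q : ℝ → ℝ} {C : ℝ} (hq : ∀ z ∈ Ioo 0 δ, |q z| ≤ C * z ^ (5 / 2 : ℝ)) :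
    |∫ z in 0..δ, τ' z * q z| ≤ 2 / 7 * C * ((1 - A) * δ ^ (5 / 2 : ℝ)) := by
  have hbound : ∀ z ∈ Ioo 0 δ, |τ' z * q z| ≤ (1 - A) / δ * C * (z - 0) ^ (5 / 2 : ℝ) := by
    intro z hz
    rw [abs_mul, hτ.bottom z hz, abs_div, abs_neg, abs_of_nonneg (sub_nonneg.2 hA), abs_of_pos hδ,
      sub_zero, mul_assoc]
    have := hq z hz
    have := sub_nonneg.2 hA
    gcongr
  refine (abs_intervalIntegral_le_of_abs_le_rpow_sub_left hδ.le (by norm_num) hbound).trans_eq ?_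
  rw [sub_zero, Real.rpow_add_one hδ.ne']
  field_simp
  norm_num

theorem abs_integral_top_le (hτ : IsNoSlipProfileDeriv A δ ε τ') (hA : 0 ≤ A) (hε₀ : 0 < ε)
    (hε₁ : ε < 1) {q : ℝ → ℝ} {C : ℝ}
    (hq : ∀ z ∈ Ioo (1 - ε) 1, |q z| ≤ C * (1 - z) ^ (5 / 2 : ℝ)) :
    |∫ z in (1 - ε)..1, τ' z * q z| ≤ 2 / 7 * C * (A * ε ^ (5 / 2 : ℝ) / (1 - ε)) := by
  have hε : 0 < 1 - ε := by linarith
  have hbound : ∀ z ∈ Ioo (1 - ε) 1,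
      |τ' z * q z| ≤ A / (ε * (1 - ε)) * C * (1 - z) ^ (5 / 2 : ℝ) := by
    intro z hz
    rw [abs_mul, mul_assoc]
    exact mul_le_mul (hτ.abs_top_le hA hε₀ hε₁ hz) (hq z hz) (abs_nonneg _) (by positivity)
  refine (abs_intervalIntegral_le_of_abs_le_rpow_sub_right (by linarith) (by norm_num)
    hbound).trans_eq ?_
  rw [sub_sub_cancel, Real.rpow_add_one hε₀.ne']
  field_simp
  norm_num

theorem intervalIntegrable (hτ : IsNoSlipProfileDeriv A δ ε τ') (hδ : 0 ≤ δ) (hε₀ : 0 ≤ ε)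
    (hε₁ : ε < 1) (hδε : δ ≤ 1 - ε) : IntervalIntegrable τ' volume 0 1 :=
  ((hτ.intervalIntegrable_bottom hδ).trans (hτ.intervalIntegrable_bulk hδε)).trans
    (hτ.intervalIntegrable_top hε₀ hε₁)

theorem integral_bulk_eq_zero (hτ : IsNoSlipProfileDeriv A δ ε τ') (hδε : δ ≤ 1 - ε) (q : ℝ → ℝ) :
    ∫ z in δ..(1 - ε), τ' z * q z = 0 := by
  rw [intervalIntegral.integral_congr_Ioo_of_le hδε (g := fun _ => 0) fun z hz => by
    simp only [hτ.bulk z hz, zero_mul], intervalIntegral.integral_zero]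

theorem integral_mul_eq_add (hτ : IsNoSlipProfileDeriv A δ ε τ') (hδ : 0 ≤ δ) (hε₀ : 0 ≤ ε)
    (hε₁ : ε < 1) (hδε : δ ≤ 1 - ε) {q : ℝ → ℝ} (hq : Continuous q) :
    ∫ z in 0..1, τ' z * q z =
      (∫ z in 0..δ, τ' z * q z) + ∫ z in (1 - ε)..1, τ' z * q z := by
  have bottom := (hτ.intervalIntegrable_bottom hδ).mul_continuousOn hq.continuousOn
  have bulk := (hτ.intervalIntegrable_bulk hδε).mul_continuousOn hq.continuousOn
  have top := (hτ.intervalIntegrable_top hε₀ hε₁).mul_continuousOn hq.continuousOn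
  rw [← intervalIntegral.integral_add_adjacent_intervals (bottom.trans bulk) top,
    ← intervalIntegral.integral_add_adjacent_intervals bottom bulk,
    hτ.integral_bulk_eq_zero hδε, add_zero]

end IsNoSlipProfileDeriv

theorem integral_quadraticForm_eq_add {τ' w T : ℝ → ℝ} (hτ : IntervalIntegrable τ' volume 0 1)
    (hw : Continuous w) (hT : ContDiff ℝ 1 T) (β k : ℝ) :
    ∫ z in 0..1, (β * deriv T z ^ 2 + β * k ^ 2 * T z ^ 2 + τ' z * w z * T z) =
      β * thermalDissipation k T + ∫ z in 0..1, τ' z * (w z * T z) := by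
  have hwT : Continuous fun z => w z * T z := hw.mul hT.continuous
  rw [thermalDissipation, ← intervalIntegral.integral_const_mul,
    ← intervalIntegral.integral_add (Continuous.intervalIntegrable (by fun_prop) _ _)
      (hτ.mul_continuousOn hwT.continuousOn)]
  congr 1 with z
  ring

theorem no_slip_spectral_constraint_general {R ε δ A β k : ℝ} {τ' w T : ℝ → ℝ} (hR : 0 ≤ R)
    (hδ : 0 < δ) (hε : 0 < ε) (hδε : δ ≤ 1 - ε) (hA : A ∈ Icc 0 1)
    (hβ : R / 7 * ((1 - A) * δ ^ (5 / 2 : ℝ) + A * ε ^ (5 / 2 : ℝ) / (1 - ε)) ≤ β)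
    (hτ : IsNoSlipProfileDeriv A δ ε τ') (hw : IsClampedSolution 0 1 k w (fun z => R * T z))
    (hT : ContDiff ℝ 1 T) (hT₀ : T 0 = 0) (hT₁ : T 1 = 0) :
    0 ≤ ∫ z in 0..1, (β * deriv T z ^ 2 + β * k ^ 2 * T z ^ 2 + τ' z * w z * T z) := by
  have hε₁ : ε < 1 := by linarith
  have hwT : Continuous fun z => w z * T z := hw.contDiff.continuous.mul hT.continuous
  set D := thermalDissipation k T
  have bottom := hτ.abs_integral_bottom_le (q := fun z => w z * T z) (C := R / 2 * D) hδ hA.2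
    fun z hz => by
    simpa only [sub_zero, abs_of_pos hz.1] using hw.abs_mul_le_thermalDissipation hR hT hT₀
      (left_mem_Icc.2 zero_le_one) ⟨hz.1.le, by linarith [hz.2]⟩ hw.left hw.deriv_left hT₀
  have top := hτ.abs_integral_top_le (q := fun z => w z * T z) (C := R / 2 * D) hA.1 hε hε₁
    fun z hz => by
    simpa only [abs_sub_comm z, abs_of_pos (sub_pos.2 hz.2)] using
      hw.abs_mul_le_thermalDissipation hR hT hT₀ (right_mem_Icc.2 zero_le_one)
        ⟨by linarith [hz.1], hz.2.le⟩ hw.right hw.deriv_right hT₁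
  have hβD := mul_le_mul_of_nonneg_right hβ (thermalDissipation_nonneg k T)
  rw [integral_quadraticForm_eq_add (hτ.intervalIntegrable hδ.le hε.le hε₁ hδε)
      hw.contDiff.continuous hT,
    hτ.integral_mul_eq_add hδ.le hε.le hε₁ hδε hwT]
  linarith [neg_le_of_abs_le bottom, neg_le_of_abs_le top]

/-! ### Scaling of the profile parameters -/

section Parameters

variable {R ε δ A : ℝ}

theorem rpow_one_third_pow_three {x : ℝ} (hx : 0 ≤ x) : (x ^ ((1 : ℝ) / 3)) ^ 3 = x := by
  rw [← Real.rpow_natCast, ← Real.rpow_mul hx]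
  norm_num

theorem sq_rpow_three_halves {x : ℝ} (hx : 0 ≤ x) : (x ^ (3 / 2 : ℝ)) ^ 2 = x ^ 3 := by
  rw [← Real.rpow_natCast, ← Real.rpow_mul hx, ← Real.rpow_natCast]
  norm_num

theorem bottomWidth_pow_three (hδ : δ = (25 : ℝ) ^ ((1 : ℝ) / 3) / 2 * ε ^ 2) :
    δ ^ 3 = 25 / 8 * ε ^ 6 := by
  rw [hδ, mul_pow, div_pow, rpow_one_third_pow_three (by norm_num)]
  ring

theorem bottomWidth_le (hε₀ : 0 ≤ ε) (hε₁ : ε ≤ 1 / 3) (hδ : δ ^ 3 = 25 / 8 * ε ^ 6) :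
    δ ≤ 1 / 6 := by
  refine le_of_pow_le_pow_left₀ three_ne_zero (by norm_num) ?_
  calc δ ^ 3 = 25 / 8 * ε ^ 6 := hδ
    _ ≤ 25 / 8 * (1 / 3) ^ 6 := by gcongr
    _ ≤ (1 / 6) ^ 3 := by norm_num

theorem sqrt_two_mul_bottomWidth_rpow (hε : 0 ≤ ε) (hδ₀ : 0 ≤ δ) (hδ : δ ^ 3 = 25 / 8 * ε ^ 6) :
    √2 * δ ^ (3 / 2 : ℝ) = 5 / 2 * ε ^ 3 := by
  refine (pow_left_inj₀ (by positivity) (by positivity) two_ne_zero).1 ?_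
  rw [mul_pow, Real.sq_sqrt zero_le_two, sq_rpow_three_halves hδ₀, hδ]
  ring

theorem amplitude_mem_Icc (hε₀ : 0 ≤ ε) (hε₁ : ε ≤ 1) (hδ₀ : 0 ≤ δ) (hδ₁ : δ ≤ 1)
    (hA : A = δ * ε ^ ((1 : ℝ) / 2) / √2) : A ∈ Icc 0 1 := by
  have hε : ε ^ ((1 : ℝ) / 2) ≤ 1 := Real.rpow_le_one hε₀ hε₁ (by norm_num)
  have h2 : 1 ≤ √2 := Real.one_le_sqrt.2 one_le_two
  rw [hA]
  exact ⟨by positivity, div_le_one_of_le₀ ((mul_le_one₀ hδ₁ (by positivity) hε).trans h2)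
    (by positivity)⟩

theorem amplitude_mul_rpow (hε : 0 < ε) (hδ₀ : 0 < δ) (hδ : δ ^ 3 = 25 / 8 * ε ^ 6)
    (hA : A = δ * ε ^ ((1 : ℝ) / 2) / √2) :
    A * ε ^ (5 / 2 : ℝ) = 2 / 5 * δ ^ (5 / 2 : ℝ) := by
  have hε₃ : ε ^ ((1 : ℝ) / 2) * ε ^ (5 / 2 : ℝ) = ε ^ 3 := by
    rw [← Real.rpow_add hε, ← Real.rpow_natCast]
    norm_num
  have hδ₅ : δ ^ (5 / 2 : ℝ) = δ ^ (3 / 2 : ℝ) * δ := by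
    rw [← Real.rpow_add_one hδ₀.ne']
    norm_num
  calc A * ε ^ (5 / 2 : ℝ)
      = δ * (ε ^ ((1 : ℝ) / 2) * ε ^ (5 / 2 : ℝ)) / √2 := by rw [hA]; ring
    _ = 2 / 5 * δ * (5 / 2 * ε ^ 3) / √2 := by rw [hε₃]; ring
    _ = 2 / 5 * (δ ^ (3 / 2 : ℝ) * δ) := by
        rw [← sqrt_two_mul_bottomWidth_rpow hε.le hδ₀.le hδ]
        field_simp
    _ = 2 / 5 * δ ^ (5 / 2 : ℝ) := by rw [hδ₅]

theorem mul_rpow_bottomWidth_le (hR : 0 < R) (hδ₀ : 0 ≤ δ)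
    (hδ : δ ≤ (98 / 9 * (7 - √41)) ^ ((1 : ℝ) / 3) * R ^ (-(2 : ℝ) / 3)) :
    R * δ ^ (3 / 2 : ℝ) ≤ 35 / 12 := by
  have sqrt_lt : √41 < 7 := (Real.sqrt_lt' (by norm_num)).2 (by norm_num)
  have lt_sqrt : 32 / 5 < √41 := Real.lt_sqrt_of_sq_lt (by norm_num)
  have hR₃ : (R ^ (-(2 : ℝ) / 3)) ^ 3 * R ^ 2 = 1 := by
    rw [← Real.rpow_natCast (R ^ (-(2 : ℝ) / 3)), ← Real.rpow_mul hR.le, ← Real.rpow_natCast R,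
      ← Real.rpow_add hR]
    norm_num
  refine le_of_pow_le_pow_left₀ two_ne_zero (by norm_num) ?_
  calc (R * δ ^ (3 / 2 : ℝ)) ^ 2 = δ ^ 3 * R ^ 2 := by
        rw [mul_pow, sq_rpow_three_halves hδ₀, mul_comm]
    _ ≤ ((98 / 9 * (7 - √41)) ^ ((1 : ℝ) / 3) * R ^ (-(2 : ℝ) / 3)) ^ 3 * R ^ 2 := by gcongr
    _ = 98 / 9 * (7 - √41) := by
        rw [mul_pow, mul_assoc, hR₃, mul_one, rpow_one_third_pow_three (by linarith)]
    _ ≤ (35 / 12) ^ 2 := by linarith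

theorem layer_threshold_le (hR : 0 ≤ R) (hε : ε ≤ 1 / 3) (hδ₀ : 0 < δ)
    (hA₀ : 0 ≤ A) (hAε : A * ε ^ (5 / 2 : ℝ) = 2 / 5 * δ ^ (5 / 2 : ℝ))
    (hRδ : R * δ ^ (3 / 2 : ℝ) ≤ 35 / 12) :
    R / 7 * ((1 - A) * δ ^ (5 / 2 : ℝ) + A * ε ^ (5 / 2 : ℝ) / (1 - ε)) ≤ 2 / 3 * δ := by
  have top_le : A * ε ^ (5 / 2 : ℝ) / (1 - ε) ≤ 3 / 5 * δ ^ (5 / 2 : ℝ) := by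
    rw [hAε, div_le_iff₀ (by linarith)]
    have : 0 ≤ δ ^ (5 / 2 : ℝ) * (1 / 3 - ε) := mul_nonneg (by positivity) (by linarith)
    linarith
  have bottom_le : (1 - A) * δ ^ (5 / 2 : ℝ) ≤ δ ^ (5 / 2 : ℝ) :=
    mul_le_of_le_one_left (by positivity) (by linarith)
  calc R / 7 * ((1 - A) * δ ^ (5 / 2 : ℝ) + A * ε ^ (5 / 2 : ℝ) / (1 - ε))
      ≤ R / 7 * (δ ^ (5 / 2 : ℝ) + 3 / 5 * δ ^ (5 / 2 : ℝ)) := by gcongr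
    _ = 8 / 35 * (R * δ ^ (3 / 2 : ℝ)) * δ := by
        rw [show (5 / 2 : ℝ) = 3 / 2 + 1 by norm_num, Real.rpow_add_one hδ₀.ne']
        ring
    _ ≤ 8 / 35 * (35 / 12) * δ := by gcongr
    _ = 2 / 3 * δ := by ring

end Parameters

/-- The no-slip spectral constraint `S_k ≥ 0` holds for the paper's background profile
when `δ = (25^{1/3}/2)ε²`, `A = δε^{1/2}/√2`, `δ ≤ ((98/9)(7-√41))^{1/3} R^{-2/3}` and
`β ≥ (2/3)δ`. -/
theorem no_slip_spectral_constraint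
    (R ε δ A β : ℝ) (hR : 0 < R) (hε : ε ∈ Set.Ioc (0:ℝ) (1/3))
    (hδdef : δ = (25:ℝ) ^ ((1:ℝ)/3) / 2 * ε^2)
    (hAdef : A = δ * ε ^ ((1:ℝ)/2) / Real.sqrt 2)
    (hδle : δ ≤ ((98/9) * (7 - Real.sqrt 41)) ^ ((1:ℝ)/3) * R ^ (-(2:ℝ)/3))
    (hβ : β ≥ (2/3) * δ)
    (τ' : ℝ → ℝ)
    (hτ1 : ∀ z ∈ Set.Ioo (0:ℝ) δ, τ' z = -(1-A) / δ)
    (hτ2 : ∀ z ∈ Set.Ioo δ (1-ε), τ' z = 0)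
    (hτ3 : ∀ z ∈ Set.Ioo (1-ε) (1:ℝ), τ' z = -(A * (1-ε) / ε) / z^2) :
    ∀ k : ℝ, 0 < k → ∀ w T : ℝ → ℝ, ContDiff ℝ 4 w → ContDiff ℝ 1 T →
      (∀ z ∈ Set.Icc (0:ℝ) 1,
        iteratedDeriv 4 w z - 2 * k^2 * iteratedDeriv 2 w z + k^4 * w z = R * k^2 * T z) →
      w 0 = 0 → w 1 = 0 → deriv w 0 = 0 → deriv w 1 = 0 → T 0 = 0 → T 1 = 0 →
      0 ≤ ∫ z in (0:ℝ)..1,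
        (β * (deriv T z)^2 + β * k^2 * (T z)^2 + τ' z * w z * T z) := by
  intro k _ w T hw hT ode w₀ w₁ w₀' w₁' T₀ T₁
  obtain ⟨hε₀, hε₁⟩ := hε
  have hδ₀ : 0 < δ := by rw [hδdef]; positivity
  have hδ₃ := bottomWidth_pow_three hδdef
  have hδ₁ : δ ≤ 1 / 6 := bottomWidth_le hε₀.le hε₁ hδ₃
  have hA : A ∈ Icc 0 1 :=
    amplitude_mem_Icc hε₀.le (by linarith) hδ₀.le (by linarith) hAdef
  have hAε := amplitude_mul_rpow hε₀ hδ₀ hδ₃ hAdef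
  have hRδ := mul_rpow_bottomWidth_le hR hδ₀.le hδle
  have threshold := layer_threshold_le hR.le hε₁ hδ₀ hA.1 hAε hRδ
  have clamped : IsClampedSolution 0 1 k w fun z => R * T z :=
    ⟨hw, (hT.continuous.const_mul R).continuousOn, fun z hz => by linear_combination ode z hz,
      w₀, w₁, w₀', w₁'⟩
  exact no_slip_spectral_constraint_general hR.le hδ₀ hε₀ (by linarith) hA (threshold.trans hβ)
    ⟨hτ1, hτ2, hτ3⟩ clamped hT T₀ T₁
end

section
/- Let R > 0 and ε ∈ (0, 1/3], set δ := (81/100) ε⁴ and A := δ ε^{1/2}/3, and suppose δ ≤ (2⁴⁹ · 5³ / 3³⁰)^{2/29} R^{−40/29}. Let β ≥ 2√2 δ/9, and let τ' : (0,1) → ℝ be given by τ'(z) = −1/δ on (0,δ), τ'(z) = A on (δ,1−ε), and τ'(z) = −(A/ε)(1−ε−δ)(1−ε)/z² on (1−ε,1). Then for every k > 0 and all functions w, T : [0,1] → ℝ with w four times continuously differentiable, T continuously differentiable, satisfying w''''(z) − 2k² w''(z) + k⁴ w(z) = R k² T(z) for all z ∈ [0,1], w(0) = w(1) = 0, w''(0)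 = w''(1) = 0, and T(0) = T(1) = 0, one has ∫₀¹ ( β T'(z)² + β k² T(z)² + τ'(z) w(z) T(z) ) dz ≥ 0. -/
open MeasureTheory

/-!
The pseudo-vorticity `ζ = (w'' - k²w) / k` vanishes at both walls and solves
`ζ'' - k²ζ = R k T`. Testing these two second-order relations against each other gives
`∫ ζ² = R ∫ w T`, `k² ∫ ζ² ≤ R² ∫ T²` and `|w'|² ≤ k ∫ ζ²`. Write `τ' = A + (τ' - A)`: the
remainder lives in the two boundary layers, where Cauchy-Schwarz bounds `|w T|` by
`(k ∫ ζ² ∫ T'²)^{1/2}` times the `3/2` power of the distance to the wall. Young's inequality then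
leaves a term `δ² k ∫ ζ²`, which for small `k` is absorbed by `A ∫ w T = (A / R) ∫ ζ²` and for
large `k` by `β k² ∫ T²`.
-/

open Set
open scoped Interval

section DirichletEstimates

variable {a b k x y z₀ : ℝ} {f f' f'' g g' g'' : ℝ → ℝ}

theorem sq_intervalIntegral_le_mul_integral_sq (hab : a ≤ b)
    (hf : IntervalIntegrable f volume a b)
    (hf_sq : IntervalIntegrable (fun z ↦ f z ^ 2) volume a b) :
    (∫ z in a..b, f z) ^ 2 ≤ (b - a) * ∫ z in a..b, f z ^ 2 := by
  obtain rfl | hlt := hab.eq_or_lt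
  · simp
  set S := ∫ z in a..b, f z
  have expansion : ∫ z in a..b, ((b - a) * f z - S) ^ 2 =
      (b - a) * ((b - a) * (∫ z in a..b, f z ^ 2) - S ^ 2) := by
    calc
      _ = ∫ z in a..b, ((b - a) ^ 2 * f z ^ 2 - 2 * (b - a) * S * f z + S ^ 2) := by
        congr 1 with z
        ring
      _ = (b - a) ^ 2 * (∫ z in a..b, f z ^ 2) - 2 * (b - a) * S * S + (b - a) * S ^ 2 := by
        rw [intervalIntegral.integral_add ((hf_sq.const_mul _).sub (hf.const_mul _))
            intervalIntegrable_const, intervalIntegral.integral_sub (hf_sq.const_mul _)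
            (hf.const_mul _), intervalIntegral.integral_const_mul,
          intervalIntegral.integral_const_mul, intervalIntegral.integral_const, smul_eq_mul]
      _ = _ := by ring
  have nonneg : 0 ≤ ∫ z in a..b, ((b - a) * f z - S) ^ 2 :=
    intervalIntegral.integral_nonneg hab fun z _ ↦ sq_nonneg _
  rw [expansion] at nonneg
  linarith [nonneg_of_mul_nonneg_right nonneg (sub_pos.2 hlt)]

theorem abs_sub_le_sqrt_integral_sq_deriv_mul_sqrt
    (hf : ∀ z ∈ [[a, b]], HasDerivAt f (f' z) z) (hf' : ContinuousOn f' [[a, b]])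
    (hx : a ≤ x) (hxy : x ≤ y) (hy : y ≤ b) :
    |f y - f x| ≤ √(∫ z in a..b, f' z ^ 2) * √(y - x) := by
  have hsub : [[x, y]] ⊆ [[a, b]] := by
    rw [uIcc_of_le hxy, uIcc_of_le (hx.trans (hxy.trans hy))]
    exact Icc_subset_Icc hx hy
  have hf'xy : ContinuousOn f' [[x, y]] := hf'.mono hsub
  have enlarge : ∫ z in x..y, f' z ^ 2 ≤ ∫ z in a..b, f' z ^ 2 :=
    intervalIntegral.integral_mono_interval hx hxy hy
      (Filter.Eventually.of_forall fun z ↦ sq_nonneg (f' z)) (hf'.pow 2).intervalIntegrable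
  rw [← Real.sqrt_mul' _ (sub_nonneg.2 hxy)]
  refine Real.abs_le_sqrt ?_
  calc
    (f y - f x) ^ 2 = (∫ z in x..y, f' z) ^ 2 := by
      rw [intervalIntegral.integral_eq_sub_of_hasDerivAt (fun z hz ↦ hf z (hsub hz))
        hf'xy.intervalIntegrable]
    _ ≤ (y - x) * ∫ z in x..y, f' z ^ 2 :=
      sq_intervalIntegral_le_mul_integral_sq hxy hf'xy.intervalIntegrable
        (hf'xy.pow 2).intervalIntegrable
    _ ≤ (y - x) * ∫ z in a..b, f' z ^ 2 :=
      mul_le_mul_of_nonneg_left enlarge (sub_nonneg.2 hxy)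
    _ = _ := mul_comm _ _

theorem mul_sq_le_integral_sq_deriv_add_sq (hab : a ≤ b)
    (hf : ∀ z ∈ [[a, b]], HasDerivAt f (f' z) z) (hf' : ContinuousOn f' [[a, b]])
    (hz₀ : z₀ ∈ [[a, b]]) (hfz₀ : f z₀ = 0) (hx : x ∈ [[a, b]]) :
    k * f x ^ 2 ≤ ∫ z in a..b, (f' z ^ 2 + k ^ 2 * f z ^ 2) := by
  have hcont : ContinuousOn f [[a, b]] := HasDerivAt.continuousOn hf
  have energy_cont : ContinuousOn (fun z ↦ f' z ^ 2 + k ^ 2 * f z ^ 2) [[a, b]] := by fun_prop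
  have integrand_cont : ContinuousOn (fun z ↦ k * (2 * f z * f' z)) [[a, b]] := by fun_prop
  have hsub : [[z₀, x]] ⊆ [[a, b]] := uIcc_subset_uIcc hz₀ hx
  have primitive : ∫ z in z₀..x, k * (2 * f z * f' z) = k * f x ^ 2 := by
    rw [intervalIntegral.integral_eq_sub_of_hasDerivAt (f := fun z ↦ k * f z ^ 2)
      (fun z hz ↦ (((hf z (hsub hz)).pow 2).const_mul k).congr_deriv (by norm_num))
      (integrand_cont.mono hsub).intervalIntegrable]
    simp [hfz₀]
  calc
    k * f x ^ 2 ≤ |∫ z in z₀..x, k * (2 * f z * f' z)| := primitive ▸ le_abs_self _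
    _ ≤ |∫ z in z₀..x, (f' z ^ 2 + k ^ 2 * f z ^ 2)| := by
      rw [← Real.norm_eq_abs]
      refine intervalIntegral.norm_integral_le_abs_of_norm_le
        (Filter.Eventually.of_forall fun z ↦ ?_) (energy_cont.mono hsub).intervalIntegrable
      rw [Real.norm_eq_abs, abs_le]
      constructor <;> nlinarith [sq_nonneg (f' z + k * f z), sq_nonneg (f' z - k * f z)]
    _ ≤ |∫ z in a..b, (f' z ^ 2 + k ^ 2 * f z ^ 2)| :=
      intervalIntegral.abs_integral_mono_interval (uIoc_subset_uIoc_of_uIcc_subset_uIcc hsub)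
        (Filter.Eventually.of_forall fun z ↦ by simp only [Pi.zero_apply]; positivity)
        energy_cont.intervalIntegrable
    _ = _ := abs_of_nonneg (intervalIntegral.integral_nonneg hab fun z _ ↦ by positivity)

theorem integral_mul_deriv_eq_neg_of_eq_zero
    (hf : ∀ z ∈ [[a, b]], HasDerivAt f (f' z) z) (hg : ∀ z ∈ [[a, b]], HasDerivAt g (g' z) z)
    (hf' : IntervalIntegrable f' volume a b) (hg' : IntervalIntegrable g' volume a b)
    (hfa : f a = 0) (hfb : f b = 0) :
    ∫ z in a..b, f z * g' z = -∫ z in a..b, f' z * g z := by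
  rw [intervalIntegral.integral_mul_deriv_eq_deriv_mul hf hg hf' hg', hfa, hfb]
  ring

theorem integral_mul_helmholtz_comm (c : ℝ)
    (hf : ∀ z ∈ [[a, b]], HasDerivAt f (f' z) z) (hf' : ∀ z ∈ [[a, b]], HasDerivAt f' (f'' z) z)
    (hf'' : ContinuousOn f'' [[a, b]])
    (hg : ∀ z ∈ [[a, b]], HasDerivAt g (g' z) z) (hg' : ∀ z ∈ [[a, b]], HasDerivAt g' (g'' z) z)
    (hg'' : ContinuousOn g'' [[a, b]])
    (hfa : f a = 0) (hfb : f b = 0) (hga : g a = 0) (hgb : g b = 0) :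
    ∫ z in a..b, f z * (g'' z - c * g z) = ∫ z in a..b, (f'' z - c * f z) * g z := by
  have hf_cont : ContinuousOn f [[a, b]] := HasDerivAt.continuousOn hf
  have hf'_cont : ContinuousOn f' [[a, b]] := HasDerivAt.continuousOn hf'
  have hg_cont : ContinuousOn g [[a, b]] := HasDerivAt.continuousOn hg
  have hg'_cont : ContinuousOn g' [[a, b]] := HasDerivAt.continuousOn hg'
  have symm : ∫ z in a..b, f z * g'' z = ∫ z in a..b, f'' z * g z := by
    calc
      _ = -∫ z in a..b, f' z * g' z :=
        integral_mul_deriv_eq_neg_of_eq_zero hf hg' hf'_cont.intervalIntegrable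
          hg''.intervalIntegrable hfa hfb
      _ = ∫ z in a..b, g z * f'' z := by
        rw [integral_mul_deriv_eq_neg_of_eq_zero hg hf' hg'_cont.intervalIntegrable
          hf''.intervalIntegrable hga hgb]
        simp only [mul_comm]
      _ = _ := by simp only [mul_comm]
  simp only [mul_sub, sub_mul, mul_assoc, mul_left_comm (f _) c]
  rw [intervalIntegral.integral_sub (ContinuousOn.intervalIntegrable (by fun_prop))
      (ContinuousOn.intervalIntegrable (by fun_prop)),
    intervalIntegral.integral_sub (ContinuousOn.intervalIntegrable (by fun_prop))
      (ContinuousOn.intervalIntegrable (by fun_prop)), symm]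

theorem integral_sq_helmholtz (c : ℝ)
    (hf : ∀ z ∈ [[a, b]], HasDerivAt f (f' z) z) (hf' : ∀ z ∈ [[a, b]], HasDerivAt f' (f'' z) z)
    (hf'' : ContinuousOn f'' [[a, b]]) (hfa : f a = 0) (hfb : f b = 0) :
    ∫ z in a..b, (f'' z - c * f z) ^ 2 =
      (∫ z in a..b, f'' z ^ 2) + 2 * c * (∫ z in a..b, f' z ^ 2) +
        c ^ 2 * ∫ z in a..b, f z ^ 2 := by
  have hf_cont : ContinuousOn f [[a, b]] := HasDerivAt.continuousOn hf
  have hf'_cont : ContinuousOn f' [[a, b]] := HasDerivAt.continuousOn hf'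
  have cross : ∫ z in a..b, f z * f'' z = -∫ z in a..b, f' z ^ 2 := by
    simp only [sq]
    exact integral_mul_deriv_eq_neg_of_eq_zero hf hf' hf'_cont.intervalIntegrable
      hf''.intervalIntegrable hfa hfb
  calc
    _ = ∫ z in a..b, (f'' z ^ 2 - 2 * c * (f z * f'' z) + c ^ 2 * f z ^ 2) := by
      congr 1 with z
      ring
    _ = (∫ z in a..b, f'' z ^ 2) - 2 * c * (∫ z in a..b, f z * f'' z) +
        c ^ 2 * ∫ z in a..b, f z ^ 2 := by
      rw [intervalIntegral.integral_add (ContinuousOn.intervalIntegrable (by fun_prop))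
          (ContinuousOn.intervalIntegrable (by fun_prop)),
        intervalIntegral.integral_sub (ContinuousOn.intervalIntegrable (by fun_prop))
          (ContinuousOn.intervalIntegrable (by fun_prop)),
        intervalIntegral.integral_const_mul, intervalIntegral.integral_const_mul]
    _ = _ := by rw [cross]; ring

theorem sq_mul_integral_sq_le_integral_sq_helmholtz {c : ℝ} (hab : a ≤ b) (hc : 0 ≤ c)
    (hf : ∀ z ∈ [[a, b]], HasDerivAt f (f' z) z) (hf' : ∀ z ∈ [[a, b]], HasDerivAt f' (f'' z) z)
    (hf'' : ContinuousOn f'' [[a, b]]) (hfa : f a = 0) (hfb : f b = 0) :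
    c ^ 2 * ∫ z in a..b, f z ^ 2 ≤ ∫ z in a..b, (f'' z - c * f z) ^ 2 := by
  have deriv_nonneg : 0 ≤ ∫ z in a..b, f' z ^ 2 :=
    intervalIntegral.integral_nonneg hab fun z _ ↦ sq_nonneg _
  have deriv2_nonneg : 0 ≤ ∫ z in a..b, f'' z ^ 2 :=
    intervalIntegral.integral_nonneg hab fun z _ ↦ sq_nonneg _
  rw [integral_sq_helmholtz c hf hf' hf'' hfa hfb]
  linarith [mul_nonneg hc deriv_nonneg]

theorem mul_sq_deriv_le_integral_sq_helmholtz (hab : a < b)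
    (hf : ∀ z ∈ [[a, b]], HasDerivAt f (f' z) z) (hf' : ∀ z ∈ [[a, b]], HasDerivAt f' (f'' z) z)
    (hf'' : ContinuousOn f'' [[a, b]]) (hfa : f a = 0) (hfb : f b = 0) (hx : x ∈ [[a, b]]) :
    k * f' x ^ 2 ≤ ∫ z in a..b, (f'' z - k ^ 2 * f z) ^ 2 := by
  have hf'_cont : ContinuousOn f' [[a, b]] := HasDerivAt.continuousOn hf'
  obtain ⟨z₀, hz₀, hf'z₀⟩ : ∃ z₀ ∈ Ioo a b, f' z₀ = 0 :=
    exists_hasDerivAt_eq_zero hab ((HasDerivAt.continuousOn hf).mono Icc_subset_uIcc)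
      (hfa.trans hfb.symm) fun z hz ↦ hf z (Icc_subset_uIcc (Ioo_subset_Icc_self hz))
  have deriv_nonneg : 0 ≤ ∫ z in a..b, f' z ^ 2 :=
    intervalIntegral.integral_nonneg hab.le fun z _ ↦ sq_nonneg _
  have self_nonneg : 0 ≤ ∫ z in a..b, f z ^ 2 :=
    intervalIntegral.integral_nonneg hab.le fun z _ ↦ sq_nonneg _
  calc
    k * f' x ^ 2 ≤ ∫ z in a..b, (f'' z ^ 2 + k ^ 2 * f' z ^ 2) :=
      mul_sq_le_integral_sq_deriv_add_sq hab.le hf' hf''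
        (Icc_subset_uIcc (Ioo_subset_Icc_self hz₀)) hf'z₀ hx
    _ = (∫ z in a..b, f'' z ^ 2) + k ^ 2 * ∫ z in a..b, f' z ^ 2 := by
      rw [intervalIntegral.integral_add (ContinuousOn.intervalIntegrable (by fun_prop))
        (ContinuousOn.intervalIntegrable (by fun_prop)), intervalIntegral.integral_const_mul]
    _ ≤ _ := by
      rw [integral_sq_helmholtz (k ^ 2) hf hf' hf'' hfa hfb]
      nlinarith [mul_nonneg (sq_nonneg k) deriv_nonneg,
        mul_nonneg (sq_nonneg (k ^ 2)) self_nonneg]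

end DirichletEstimates

/-- The amplitude `ζ = (w'' - k²w) / k` of the pseudo-vorticity at horizontal wavenumber `k`. -/
noncomputable def pseudoVorticity (k : ℝ) (w : ℝ → ℝ) (z : ℝ) : ℝ :=
  (iteratedDeriv 2 w z - k ^ 2 * w z) / k

theorem hasDerivAt_pseudoVorticity {w : ℝ → ℝ} (k : ℝ) (hw : ContDiff ℝ 3 w) (z : ℝ) :
    HasDerivAt (pseudoVorticity k w) (pseudoVorticity k (deriv w) z) z := by
  have hw_deriv : HasDerivAt w (deriv w z) z := (hw.differentiable (by norm_num) z).hasDerivAt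
  have hw_deriv2 : HasDerivAt (iteratedDeriv 2 w) (iteratedDeriv 2 (deriv w) z) z := by
    rw [← iteratedDeriv_succ', iteratedDeriv_succ (n := 2)]
    exact (hw.differentiable_iteratedDeriv 2 (by norm_num) z).hasDerivAt
  exact (hw_deriv2.sub (hw_deriv.const_mul (k ^ 2))).div_const k

theorem continuous_pseudoVorticity {w : ℝ → ℝ} (k : ℝ) (hw : ContDiff ℝ 2 w) :
    Continuous (pseudoVorticity k w) :=
  ((hw.continuous_iteratedDeriv 2 le_rfl).sub (hw.continuous.const_mul _)).div_const k

/-- `w` is the vertical-velocity amplitude driven by the temperature amplitude `T` at Rayleigh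
number `R` and wavenumber `k`, in the infinite-Prandtl-number limit with stress-free boundaries. -/
structure IsVelocityResponse (R k : ℝ) (w T : ℝ → ℝ) : Prop where
  contDiff : ContDiff ℝ 4 w
  ode : ∀ z ∈ Icc (0 : ℝ) 1,
    iteratedDeriv 4 w z - 2 * k ^ 2 * iteratedDeriv 2 w z + k ^ 4 * w z = R * k ^ 2 * T z
  zero_left : w 0 = 0
  zero_right : w 1 = 0
  deriv2_zero_left : iteratedDeriv 2 w 0 = 0
  deriv2_zero_right : iteratedDeriv 2 w 1 = 0

namespace IsVelocityResponse

variable {R k z : ℝ} {w T : ℝ → ℝ}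

theorem contDiff_deriv (h : IsVelocityResponse R k w T) : ContDiff ℝ 3 (deriv w) :=
  ContDiff.iterate_deriv' 3 1 h.contDiff

theorem contDiff_deriv_deriv (h : IsVelocityResponse R k w T) : ContDiff ℝ 2 (deriv (deriv w)) :=
  ContDiff.iterate_deriv' 2 2 h.contDiff

theorem hasDerivAt (h : IsVelocityResponse R k w T) (z : ℝ) : HasDerivAt w (deriv w z) z :=
  (h.contDiff.differentiable (by norm_num) z).hasDerivAt

theorem hasDerivAt_deriv (h : IsVelocityResponse R k w T) (z : ℝ) :
    HasDerivAt (deriv w) (iteratedDeriv 2 w z) z := by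
  rw [iteratedDeriv_succ, iteratedDeriv_one]
  exact (h.contDiff_deriv.differentiable (by norm_num) z).hasDerivAt

theorem pseudoVorticity_left (h : IsVelocityResponse R k w T) : pseudoVorticity k w 0 = 0 := by
  simp [pseudoVorticity, h.zero_left, h.deriv2_zero_left]

theorem pseudoVorticity_right (h : IsVelocityResponse R k w T) : pseudoVorticity k w 1 = 0 := by
  simp [pseudoVorticity, h.zero_right, h.deriv2_zero_right]

theorem pseudoVorticity_deriv_deriv_sub (h : IsVelocityResponse R k w T) (hk : k ≠ 0)
    (hz : z ∈ Icc (0 : ℝ) 1) :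
    pseudoVorticity k (deriv (deriv w)) z - k ^ 2 * pseudoVorticity k w z = R * k * T z := by
  have deriv2 : deriv (deriv w) z = iteratedDeriv 2 w z := by
    rw [iteratedDeriv_succ, iteratedDeriv_one]
  have deriv4 : iteratedDeriv 2 (deriv (deriv w)) z = iteratedDeriv 4 w z := by
    rw [← iteratedDeriv_succ', ← iteratedDeriv_succ']
  rw [pseudoVorticity, pseudoVorticity, deriv2, deriv4]
  field_simp
  linarith [h.ode z hz]

theorem integral_sq_pseudoVorticity (h : IsVelocityResponse R k w T) (hk : k ≠ 0) :
    ∫ z in (0 : ℝ)..1, pseudoVorticity k w z ^ 2 = R * ∫ z in (0 : ℝ)..1, w z * T z := by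
  have helmholtz_symm := integral_mul_helmholtz_comm (a := 0) (b := 1) (k ^ 2)
    (fun z _ ↦ h.hasDerivAt z) (fun z _ ↦ h.hasDerivAt_deriv z)
    (h.contDiff.continuous_iteratedDeriv 2 (by norm_num)).continuousOn
    (fun z _ ↦ hasDerivAt_pseudoVorticity k (h.contDiff.of_le (by norm_num)) z)
    (fun z _ ↦ hasDerivAt_pseudoVorticity k h.contDiff_deriv z)
    (continuous_pseudoVorticity k h.contDiff_deriv_deriv).continuousOn
    h.zero_left h.zero_right h.pseudoVorticity_left h.pseudoVorticity_right
  refine mul_left_cancel₀ hk ?_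
  calc
    k * ∫ z in (0 : ℝ)..1, pseudoVorticity k w z ^ 2 =
        ∫ z in (0 : ℝ)..1, (iteratedDeriv 2 w z - k ^ 2 * w z) * pseudoVorticity k w z := by
      rw [← intervalIntegral.integral_const_mul]
      congr 1 with z
      rw [pseudoVorticity]
      field_simp
    _ = ∫ z in (0 : ℝ)..1,
        w z * (pseudoVorticity k (deriv (deriv w)) z - k ^ 2 * pseudoVorticity k w z) :=
      helmholtz_symm.symm
    _ = ∫ z in (0 : ℝ)..1, k * R * (w z * T z) := by
      refine intervalIntegral.integral_congr fun z hz ↦ ?_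
      rw [uIcc_of_le zero_le_one] at hz
      simp only [h.pseudoVorticity_deriv_deriv_sub hk hz]
      ring
    _ = k * (R * ∫ z in (0 : ℝ)..1, w z * T z) := by
      rw [intervalIntegral.integral_const_mul, mul_assoc]

theorem sq_mul_integral_sq_pseudoVorticity_le (h : IsVelocityResponse R k w T) (hk : k ≠ 0) :
    k ^ 2 * ∫ z in (0 : ℝ)..1, pseudoVorticity k w z ^ 2 ≤
      R ^ 2 * ∫ z in (0 : ℝ)..1, T z ^ 2 := by
  refine le_of_mul_le_mul_left ?_ (sq_pos_of_ne_zero hk)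
  calc
    k ^ 2 * (k ^ 2 * ∫ z in (0 : ℝ)..1, pseudoVorticity k w z ^ 2) =
        (k ^ 2) ^ 2 * ∫ z in (0 : ℝ)..1, pseudoVorticity k w z ^ 2 := by ring
    _ ≤ ∫ z in (0 : ℝ)..1,
        (pseudoVorticity k (deriv (deriv w)) z - k ^ 2 * pseudoVorticity k w z) ^ 2 :=
      sq_mul_integral_sq_le_integral_sq_helmholtz zero_le_one (sq_nonneg k)
        (fun z _ ↦ hasDerivAt_pseudoVorticity k (h.contDiff.of_le (by norm_num)) z)
        (fun z _ ↦ hasDerivAt_pseudoVorticity k h.contDiff_deriv z)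
        (continuous_pseudoVorticity k h.contDiff_deriv_deriv).continuousOn
        h.pseudoVorticity_left h.pseudoVorticity_right
    _ = ∫ z in (0 : ℝ)..1, k ^ 2 * (R ^ 2 * T z ^ 2) := by
      refine intervalIntegral.integral_congr fun z hz ↦ ?_
      rw [uIcc_of_le zero_le_one] at hz
      simp only [h.pseudoVorticity_deriv_deriv_sub hk hz]
      ring
    _ = k ^ 2 * (R ^ 2 * ∫ z in (0 : ℝ)..1, T z ^ 2) := by
      rw [intervalIntegral.integral_const_mul, intervalIntegral.integral_const_mul]

theorem sq_deriv_le (h : IsVelocityResponse R k w T) (hk : 0 < k) (hz : z ∈ Icc (0 : ℝ) 1) :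
    deriv w z ^ 2 ≤ k * ∫ z in (0 : ℝ)..1, pseudoVorticity k w z ^ 2 := by
  refine le_of_mul_le_mul_left ?_ hk
  calc
    k * deriv w z ^ 2 ≤ ∫ z in (0 : ℝ)..1, (iteratedDeriv 2 w z - k ^ 2 * w z) ^ 2 :=
      mul_sq_deriv_le_integral_sq_helmholtz zero_lt_one (fun z _ ↦ h.hasDerivAt z)
        (fun z _ ↦ h.hasDerivAt_deriv z)
        (h.contDiff.continuous_iteratedDeriv 2 (by norm_num)).continuousOn
        h.zero_left h.zero_right (Icc_subset_uIcc hz)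
    _ = k ^ 2 * ∫ z in (0 : ℝ)..1, pseudoVorticity k w z ^ 2 := by
      rw [← intervalIntegral.integral_const_mul]
      congr 1 with z
      rw [pseudoVorticity]
      field_simp
    _ = _ := by ring

theorem abs_sub_le (h : IsVelocityResponse R k w T) (hk : 0 < k) {x y : ℝ}
    (hx : x ∈ Icc (0 : ℝ) 1) (hy : y ∈ Icc (0 : ℝ) 1) :
    |w y - w x| ≤ √(k * ∫ z in (0 : ℝ)..1, pseudoVorticity k w z ^ 2) * |y - x| :=
  (convex_Icc 0 1).norm_image_sub_le_of_norm_hasDerivWithin_le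
    (fun z _ ↦ (h.hasDerivAt z).hasDerivWithinAt)
    (fun _ hz ↦ Real.abs_le_sqrt (h.sq_deriv_le hk hz)) hx hy

end IsVelocityResponse

section PowerLayers

variable {E : Type*} [NormedAddCommGroup E] [NormedSpace ℝ E] {f : ℝ → E} {M r d : ℝ}

theorem norm_integral_le_of_norm_le_mul_rpow (hr : -1 < r) (hd : 0 ≤ d)
    (hf : ∀ z ∈ Ioo 0 d, ‖f z‖ ≤ M * z ^ r) :
    ‖∫ z in 0..d, f z‖ ≤ M * (d ^ (r + 1) / (r + 1)) := by
  calc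
    ‖∫ z in 0..d, f z‖ ≤ ∫ z in 0..d, M * z ^ r := by
      refine intervalIntegral.norm_integral_le_of_norm_le hd ?_
        ((intervalIntegral.intervalIntegrable_rpow' hr).const_mul M)
      filter_upwards [volume.ae_ne d] with z hzd hz
      exact hf z ⟨hz.1, lt_of_le_of_ne hz.2 hzd⟩
    _ = _ := by
      rw [intervalIntegral.integral_const_mul, integral_rpow (Or.inl hr),
        Real.zero_rpow (by linarith), sub_zero]

theorem norm_integral_le_of_norm_le_mul_sub_rpow {b : ℝ} (hr : -1 < r) (hd : 0 ≤ d)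
    (hf : ∀ z ∈ Ioo (b - d) b, ‖f z‖ ≤ M * (b - z) ^ r) :
    ‖∫ z in (b - d)..b, f z‖ ≤ M * (d ^ (r + 1) / (r + 1)) := by
  have reflected := norm_integral_le_of_norm_le_mul_rpow (f := fun z ↦ f (b - z)) hr hd
    fun z hz ↦ by simpa using hf (b - z) ⟨by linarith [hz.2], by linarith [hz.1]⟩
  rwa [intervalIntegral.integral_comp_sub_left f b, sub_zero] at reflected

end PowerLayers

/-- `τ'` is, away from the kink points, the slope of the background profile with bottom layer
width `δ`, top layer width `ε` and bulk slope `A`. -/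
structure IsProfileSlope (δ ε A : ℝ) (τ' : ℝ → ℝ) : Prop where
  bottom : ∀ z ∈ Ioo 0 δ, τ' z = -1 / δ
  bulk : ∀ z ∈ Ioo δ (1 - ε), τ' z = A
  top : ∀ z ∈ Ioo (1 - ε) 1, τ' z = -((A / ε) * (1 - ε - δ) * (1 - ε)) / z ^ 2

namespace IsProfileSlope

variable {δ ε A z : ℝ} {τ' : ℝ → ℝ}

theorem abs_sub_le_bottom (h : IsProfileSlope δ ε A τ') (hA : 0 ≤ A) (hz : z ∈ Ioo 0 δ) :
    |τ' z - A| ≤ 1 / δ + A := by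
  have hδ : 0 < δ := hz.1.trans hz.2
  have slope_nonneg : 0 ≤ 1 / δ := by positivity
  rw [h.bottom z hz, neg_div, abs_le]
  constructor <;> linarith

theorem abs_sub_le_top (h : IsProfileSlope δ ε A τ') (hδ : 0 ≤ δ) (hδε : δ ≤ 1 - ε)
    (hA : 0 ≤ A) (hz : z ∈ Ioo (1 - ε) 1) : |τ' z - A| ≤ A / ε + A := by
  have hε : 0 < ε := by linarith [hz.1, hz.2]
  have hz_pos : 0 < z := by linarith [hz.1]
  have ratio_le_one : (1 - ε - δ) * (1 - ε) / z ^ 2 ≤ 1 := by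
    rw [div_le_one (by positivity), sq]
    exact mul_le_mul (by linarith [hz.1]) hz.1.le (by linarith) hz_pos.le
  have ratio_nonneg : 0 ≤ (1 - ε - δ) * (1 - ε) / z ^ 2 :=
    div_nonneg (mul_nonneg (by linarith) (by linarith)) (sq_nonneg z)
  have hAε : 0 ≤ A / ε := by positivity
  have slope_eq : τ' z = -(A / ε * ((1 - ε - δ) * (1 - ε) / z ^ 2)) := by
    rw [h.top z hz]
    ring
  rw [slope_eq, abs_le]
  constructor <;>
    linarith [mul_le_of_le_one_right hAε ratio_le_one, mul_nonneg hAε ratio_nonneg]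

theorem intervalIntegrable (h : IsProfileSlope δ ε A τ') (hδ : 0 < δ) (hε : 0 ≤ ε)
    (hδε : δ ≤ 1 - ε) : IntervalIntegrable τ' volume 0 1 := by
  have bottom_integrable : IntervalIntegrable τ' volume 0 δ := by
    refine intervalIntegrable_const.congr_uIoo (f := fun _ ↦ -1 / δ) fun z hz ↦ ?_
    rw [uIoo_of_le hδ.le] at hz
    exact (h.bottom z hz).symm
  have bulk_integrable : IntervalIntegrable τ' volume δ (1 - ε) := by
    refine intervalIntegrable_const.congr_uIoo (f := fun _ ↦ A) fun z hz ↦ ?_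
    rw [uIoo_of_le hδε] at hz
    exact (h.bulk z hz).symm
  have top_integrable : IntervalIntegrable τ' volume (1 - ε) 1 := by
    have top_le : 1 - ε ≤ 1 := by linarith
    have continuous_slope : ContinuousOn
        (fun z ↦ -((A / ε) * (1 - ε - δ) * (1 - ε)) / z ^ 2) [[1 - ε, 1]] := by
      refine continuousOn_const.div (continuousOn_pow 2) fun z hz ↦ pow_ne_zero 2 ?_
      rw [uIcc_of_le top_le] at hz
      linarith [hz.1]
    refine continuous_slope.intervalIntegrable.congr_uIoo fun z hz ↦ ?_
    rw [uIoo_of_le top_le] at hz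
    exact (h.top z hz).symm
  exact (bottom_integrable.trans bulk_integrable).trans top_integrable

theorem integral_sub_mul (h : IsProfileSlope δ ε A τ') (hδ : 0 < δ) (hε : 0 ≤ ε)
    (hδε : δ ≤ 1 - ε) {g : ℝ → ℝ} (hg : ContinuousOn g [[0, 1]]) :
    ∫ z in (0 : ℝ)..1, (τ' z - A) * g z =
      (∫ z in (0 : ℝ)..δ, (τ' z - A) * g z) + ∫ z in (1 - ε)..1, (τ' z - A) * g z := by
  have integrable : IntervalIntegrable (fun z ↦ (τ' z - A) * g z) volume 0 1 :=
    ((h.intervalIntegrable hδ hε hδε).sub intervalIntegrable_const).mul_continuousOn hg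
  have hδ_mem : δ ∈ [[(0 : ℝ), 1]] := by
    rw [uIcc_of_le zero_le_one]
    constructor <;> linarith
  have hε_mem : 1 - ε ∈ [[(0 : ℝ), 1]] := by
    rw [uIcc_of_le zero_le_one]
    constructor <;> linarith
  have bulk_eq_zero : ∫ z in δ..(1 - ε), (τ' z - A) * g z = 0 := by
    rw [intervalIntegral.integral_congr_Ioo_of_le hδε (g := fun _ ↦ 0)
      fun z hz ↦ by rw [h.bulk z hz, sub_self, zero_mul], intervalIntegral.integral_zero]
  rw [← intervalIntegral.integral_add_adjacent_intervals
      (integrable.mono_set (uIcc_subset_uIcc_left hδ_mem))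
      (integrable.mono_set (uIcc_subset_uIcc_right hδ_mem)),
    ← intervalIntegral.integral_add_adjacent_intervals
      (integrable.mono_set (uIcc_subset_uIcc hδ_mem hε_mem))
      (integrable.mono_set (uIcc_subset_uIcc_right hε_mem)), bulk_eq_zero, zero_add]

theorem abs_integral_sub_mul_le (h : IsProfileSlope δ ε A τ') (hδ : 0 < δ) (hε : 0 ≤ ε)
    (hδε : δ ≤ 1 - ε) (hA : 0 ≤ A) {g : ℝ → ℝ} {M r : ℝ} (hr : -1 < r)
    (hg : ContinuousOn g [[0, 1]]) (hg_left : ∀ z ∈ Icc (0 : ℝ) 1, |g z| ≤ M * z ^ r)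
    (hg_right : ∀ z ∈ Icc (0 : ℝ) 1, |g z| ≤ M * (1 - z) ^ r) :
    |∫ z in (0 : ℝ)..1, (τ' z - A) * g z| ≤
      M / (r + 1) * ((1 / δ + A) * δ ^ (r + 1) + (A / ε + A) * ε ^ (r + 1)) := by
  have bottom_bound : |∫ z in (0 : ℝ)..δ, (τ' z - A) * g z| ≤
      (1 / δ + A) * M * (δ ^ (r + 1) / (r + 1)) := by
    rw [← Real.norm_eq_abs]
    refine norm_integral_le_of_norm_le_mul_rpow hr hδ.le fun z hz ↦ ?_
    rw [Real.norm_eq_abs, abs_mul, mul_assoc]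
    exact mul_le_mul (h.abs_sub_le_bottom hA hz)
      (hg_left z ⟨hz.1.le, by linarith [hz.2]⟩) (abs_nonneg _) (by positivity)
  have top_bound : |∫ z in (1 - ε)..1, (τ' z - A) * g z| ≤
      (A / ε + A) * M * (ε ^ (r + 1) / (r + 1)) := by
    rw [← Real.norm_eq_abs]
    refine norm_integral_le_of_norm_le_mul_sub_rpow hr hε fun z hz ↦ ?_
    rw [Real.norm_eq_abs, abs_mul, mul_assoc]
    exact mul_le_mul (h.abs_sub_le_top hδ.le hδε hA hz)
      (hg_right z ⟨by linarith [hz.1], hz.2.le⟩) (abs_nonneg _) (by positivity)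
  rw [h.integral_sub_mul hδ hε hδε hg]
  calc
    _ ≤ _ := (abs_add_le _ _).trans (add_le_add bottom_bound top_bound)
    _ = _ := by ring

theorem integral_quadraticForm (h : IsProfileSlope δ ε A τ') (hδ : 0 < δ) (hε : 0 ≤ ε)
    (hδε : δ ≤ 1 - ε) (β k : ℝ) {w T T' : ℝ → ℝ} (hw : ContinuousOn w [[0, 1]])
    (hT : ContinuousOn T [[0, 1]]) (hT' : ContinuousOn T' [[0, 1]]) :
    ∫ z in (0 : ℝ)..1, (β * T' z ^ 2 + β * k ^ 2 * T z ^ 2 + τ' z * w z * T z) =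
      β * (∫ z in (0 : ℝ)..1, T' z ^ 2) + β * k ^ 2 * (∫ z in (0 : ℝ)..1, T z ^ 2) +
        A * (∫ z in (0 : ℝ)..1, w z * T z) + ∫ z in (0 : ℝ)..1, (τ' z - A) * (w z * T z) := by
  have deviation_integrable : IntervalIntegrable (fun z ↦ (τ' z - A) * (w z * T z)) volume 0 1 :=
    ((h.intervalIntegrable hδ hε hδε).sub intervalIntegrable_const).mul_continuousOn
      (hw.mul hT)
  calc
    _ = ∫ z in (0 : ℝ)..1, (β * T' z ^ 2 + β * k ^ 2 * T z ^ 2 + A * (w z * T z) +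
        (τ' z - A) * (w z * T z)) := by
      congr 1 with z
      ring
    _ = _ := by
      rw [intervalIntegral.integral_add (ContinuousOn.intervalIntegrable (by fun_prop))
          deviation_integrable,
        intervalIntegral.integral_add (ContinuousOn.intervalIntegrable (by fun_prop))
          (ContinuousOn.intervalIntegrable (by fun_prop)),
        intervalIntegral.integral_add (ContinuousOn.intervalIntegrable (by fun_prop))
          (ContinuousOn.intervalIntegrable (by fun_prop)),
        intervalIntegral.integral_const_mul, intervalIntegral.integral_const_mul,
        intervalIntegral.integral_const_mul]

end IsProfileSlope

section Parameters

variable {R ε δ A : ℝ}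

theorem mul_le_pow_four_add_three_mul {c d : ℝ} (hd : 0 ≤ d) (hcd : c ^ 4 ≤ 256 * d ^ 3) (x : ℝ) :
    c * x ≤ x ^ 4 + 3 * d := by
  obtain ⟨y, hy, rfl⟩ : ∃ y : ℝ, 0 ≤ y ∧ y ^ 4 = d :=
    ⟨√√d, by positivity, by rw [pow_mul (√√d) 2 2, Real.sq_sqrt (by positivity), Real.sq_sqrt hd]⟩
  have abs_le : |c| ≤ 4 * y ^ 3 := by
    refine le_of_pow_le_pow_left₀ four_ne_zero (by positivity) ?_
    rw [Even.pow_abs (by decide)]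
    linarith
  calc
    c * x ≤ |c| * |x| := (le_abs_self _).trans_eq (abs_mul c x)
    _ ≤ 4 * y ^ 3 * |x| := mul_le_mul_of_nonneg_right abs_le (abs_nonneg x)
    _ ≤ |x| ^ 4 + 3 * y ^ 4 := by
      linarith [mul_nonneg (sq_nonneg (|x| - y)) (add_nonneg (sq_nonneg (|x| + y))
        (mul_nonneg zero_le_two (sq_nonneg y)))]
    _ = x ^ 4 + 3 * y ^ 4 := by rw [Even.pow_abs (by decide)]

theorem pow_mul_pow_le_pow_of_le_rpow_mul_rpow {x y a : ℝ} {m n p : ℕ} (hp : p ≠ 0) (hx : 0 ≤ x)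
    (hy : 0 < y) (ha : 0 ≤ a) (h : x ≤ a ^ ((m : ℝ) / p) * y ^ (-(n : ℝ) / p)) :
    x ^ p * y ^ n ≤ a ^ m := by
  have hp' : (p : ℝ) ≠ 0 := Nat.cast_ne_zero.2 hp
  calc
    x ^ p * y ^ n ≤ (a ^ ((m : ℝ) / p) * y ^ (-(n : ℝ) / p)) ^ p * y ^ n := by gcongr
    _ = a ^ m * (y ^ n)⁻¹ * y ^ n := by
      rw [mul_pow, ← Real.rpow_mul_natCast ha, ← Real.rpow_mul_natCast hy.le,
        div_mul_cancel₀ _ hp', div_mul_cancel₀ _ hp', Real.rpow_neg hy.le, Real.rpow_natCast,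
        Real.rpow_natCast]
    _ = a ^ m := inv_mul_cancel_right₀ (by positivity) _

theorem le_one_sub_of_eq_pow_four (hε : ε ∈ Ioc (0 : ℝ) (1 / 3))
    (hδ : δ = (81 / 100) * ε ^ 4) : δ ≤ 1 - ε := by
  linarith [hε.2, pow_le_pow_left₀ hε.1.le hε.2 4]

/- With `√δ = (9 / 10) ε²`, the large slope `1 / δ` on the thin bottom layer and the small slope
`A / ε` on the wide top layer both contribute at order `δ ^ (3 / 2)`. -/
theorem layer_coefficient_le (hε : ε ∈ Ioc (0 : ℝ) (1 / 3)) (hδ : δ = (81 / 100) * ε ^ 4)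
    (hA : A = δ * √ε / 3) :
    (1 / δ + A) * δ ^ (5 / 2 : ℝ) + (A / ε + A) * ε ^ (5 / 2 : ℝ) ≤ 3 / 2 * (δ * √δ) := by
  obtain ⟨hε₀, hε₁⟩ := hε
  have hδ₀ : 0 < δ := by rw [hδ]; positivity
  have sqrt_δ : √δ = 9 / 10 * ε ^ 2 := by
    rw [hδ, Real.sqrt_eq_iff_mul_self_eq (by positivity) (by positivity)]
    ring
  have rpow_eq : ∀ {x : ℝ}, 0 < x → x ^ (5 / 2 : ℝ) = x ^ 2 * √x := fun {x} hx ↦ by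
    rw [Real.sqrt_eq_rpow, ← Real.rpow_natCast, ← Real.rpow_add hx]
    norm_num
  have bottom : (1 / δ + A) * δ ^ (5 / 2 : ℝ) = (1 + A * δ) * (δ * √δ) := by
    rw [rpow_eq hδ₀]
    field_simp
  have top : (A / ε + A) * ε ^ (5 / 2 : ℝ) = (1 + ε) * (10 / 27) * (δ * √δ) := by
    rw [rpow_eq hε₀, hA, sqrt_δ]
    field_simp
    rw [Real.sq_sqrt hε₀.le]
    ring
  have δ_le : δ ≤ 1 / 100 := by
    rw [hδ]
    linarith [pow_le_pow_left₀ hε₀.le hε₁ 4]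
  have sqrt_ε_le : √ε ≤ 1 := Real.sqrt_le_one.2 (by linarith)
  have A_le : A ≤ 1 / 300 := by
    rw [hA]
    nlinarith
  have Aδ_le : A * δ ≤ 1 / 30000 := by nlinarith
  rw [bottom, top, ← add_mul]
  gcongr
  linarith

theorem pow_four_mul_pow_five_le (hR : 0 < R) (hε : 0 < ε) (hδ : δ = (81 / 100) * ε ^ 4)
    (hδR : δ ≤ ((2 : ℝ) ^ 49 * 5 ^ 3 / 3 ^ 30) ^ ((2 : ℝ) / 29) * R ^ (-(40 : ℝ) / 29)) :
    δ ^ 4 * R ^ 5 ≤ 4 * √ε ^ 3 := by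
  have scaling : δ ^ 29 * R ^ 40 ≤ ((2 : ℝ) ^ 49 * 5 ^ 3 / 3 ^ 30) ^ 2 :=
    pow_mul_pow_le_pow_of_le_rpow_mul_rpow (by norm_num) (by rw [hδ]; positivity) hR
      (by positivity) (by exact_mod_cast hδR)
  refine le_of_pow_le_pow_left₀ (n := 8) (by norm_num) (by positivity) ?_
  calc
    (δ ^ 4 * R ^ 5) ^ 8 = δ ^ 3 * (δ ^ 29 * R ^ 40) := by ring
    _ ≤ δ ^ 3 * ((2 : ℝ) ^ 49 * 5 ^ 3 / 3 ^ 30) ^ 2 :=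
      mul_le_mul_of_nonneg_left scaling (by rw [hδ]; positivity)
    _ = (81 / 100) ^ 3 * ((2 : ℝ) ^ 49 * 5 ^ 3 / 3 ^ 30) ^ 2 * (√ε ^ 2) ^ 12 := by
      rw [Real.sq_sqrt hε.le, hδ]
      ring
    _ ≤ 4 ^ 8 * (√ε ^ 2) ^ 12 := by
      gcongr
      norm_num
    _ = (4 * √ε ^ 3) ^ 8 := by ring

theorem mul_sq_mul_le_pow_four_add (hR : 0 < R) (hε : 0 < ε) (hδ : δ = (81 / 100) * ε ^ 4)
    (hδR : δ ≤ ((2 : ℝ) ^ 49 * 5 ^ 3 / 3 ^ 30) ^ ((2 : ℝ) / 29) * R ^ (-(40 : ℝ) / 29)) (k : ℝ) :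
    δ * R ^ 2 * k ≤ k ^ 4 + 3 * (10 / 27 * (√ε * R)) := by
  refine mul_le_pow_four_add_three_mul (by positivity) ?_ k
  calc
    (δ * R ^ 2) ^ 4 = δ ^ 4 * R ^ 5 * R ^ 3 := by ring
    _ ≤ 4 * √ε ^ 3 * R ^ 3 :=
      mul_le_mul_of_nonneg_right (pow_four_mul_pow_five_le hR hε hδ hδR) (by positivity)
    _ ≤ 256 * (10 / 27) ^ 3 * √ε ^ 3 * R ^ 3 := by
      gcongr
      norm_num
    _ = 256 * (10 / 27 * (√ε * R)) ^ 3 := by ring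

end Parameters
theorem abs_mul_le_of_abs_le_mul_sqrt {p q a b x : ℝ} (hx : 0 ≤ x)
    (hp : |p| ≤ a * x) (hq : |q| ≤ b * √x) : |p * q| ≤ a * b * x ^ (3 / 2 : ℝ) := by
  calc
    |p * q| = |p| * |q| := abs_mul p q
    _ ≤ a * x * (b * √x) := mul_le_mul hp hq (abs_nonneg q) ((abs_nonneg p).trans hp)
    _ = a * b * (x ^ (1 : ℝ) * x ^ (1 / 2 : ℝ)) := by
      rw [Real.sqrt_eq_rpow, Real.rpow_one]
      ring
    _ = a * b * x ^ (3 / 2 : ℝ) := by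
      rw [← Real.rpow_add_of_nonneg hx zero_le_one (by norm_num)]
      norm_num

namespace IsVelocityResponse

variable {R k ε δ A z : ℝ} {w T τ' : ℝ → ℝ}

theorem abs_mul_le_left (h : IsVelocityResponse R k w T) (hk : 0 < k) (hT : ContDiff ℝ 1 T)
    (hT₀ : T 0 = 0) (hz : z ∈ Icc (0 : ℝ) 1) :
    |w z * T z| ≤ √(k * ∫ x in (0 : ℝ)..1, pseudoVorticity k w x ^ 2) *
      √(∫ x in (0 : ℝ)..1, deriv T x ^ 2) * z ^ (3 / 2 : ℝ) := by
  refine abs_mul_le_of_abs_le_mul_sqrt hz.1 ?_ ?_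
  · simpa [h.zero_left, abs_of_nonneg hz.1] using h.abs_sub_le hk (left_mem_Icc.2 zero_le_one) hz
  · simpa [hT₀] using abs_sub_le_sqrt_integral_sq_deriv_mul_sqrt
      (fun x _ ↦ (hT.differentiable one_ne_zero x).hasDerivAt)
      (hT.continuous_deriv le_rfl).continuousOn le_rfl hz.1 hz.2

theorem abs_mul_le_right (h : IsVelocityResponse R k w T) (hk : 0 < k) (hT : ContDiff ℝ 1 T)
    (hT₁ : T 1 = 0) (hz : z ∈ Icc (0 : ℝ) 1) :
    |w z * T z| ≤ √(k * ∫ x in (0 : ℝ)..1, pseudoVorticity k w x ^ 2) *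
      √(∫ x in (0 : ℝ)..1, deriv T x ^ 2) * (1 - z) ^ (3 / 2 : ℝ) := by
  refine abs_mul_le_of_abs_le_mul_sqrt (sub_nonneg.2 hz.2) ?_ ?_
  · simpa [h.zero_right, abs_of_nonneg (sub_nonneg.2 hz.2)] using
      h.abs_sub_le hk hz (right_mem_Icc.2 zero_le_one)
  · simpa [hT₁] using abs_sub_le_sqrt_integral_sq_deriv_mul_sqrt
      (fun x _ ↦ (hT.differentiable one_ne_zero x).hasDerivAt)
      (hT.continuous_deriv le_rfl).continuousOn hz.1 hz.2 le_rfl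

theorem abs_integral_sub_mul_le (h : IsVelocityResponse R k w T) (hτ : IsProfileSlope δ ε A τ')
    (hk : 0 < k) (hε : ε ∈ Ioc (0 : ℝ) (1 / 3)) (hδ : δ = (81 / 100) * ε ^ 4)
    (hA : A = δ * √ε / 3) (hT : ContDiff ℝ 1 T) (hT₀ : T 0 = 0) (hT₁ : T 1 = 0) :
    |∫ z in (0 : ℝ)..1, (τ' z - A) * (w z * T z)| ≤
      3 / 10 * (δ * (∫ z in (0 : ℝ)..1, deriv T z ^ 2) +
        δ ^ 2 * (k * ∫ z in (0 : ℝ)..1, pseudoVorticity k w z ^ 2)) := by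
  have hε₀ : 0 < ε := hε.1
  have hδ₀ : 0 < δ := by rw [hδ]; positivity
  have hA₀ : 0 ≤ A := by rw [hA]; positivity
  have flux_cont : ContinuousOn (fun z ↦ w z * T z) [[0, 1]] :=
    (h.contDiff.continuous.mul hT.continuous).continuousOn
  have layers := hτ.abs_integral_sub_mul_le hδ₀ hε₀.le (le_one_sub_of_eq_pow_four hε hδ) hA₀
    (by norm_num) flux_cont (fun _ hz ↦ h.abs_mul_le_left hk hT hT₀ hz)
    (fun _ hz ↦ h.abs_mul_le_right hk hT hT₁ hz)
  set I := ∫ z in (0 : ℝ)..1, deriv T z ^ 2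
  set Y := k * ∫ z in (0 : ℝ)..1, pseudoVorticity k w z ^ 2
  have hI : 0 ≤ I := intervalIntegral.integral_nonneg zero_le_one fun z _ ↦ sq_nonneg _
  have hY : 0 ≤ Y :=
    mul_nonneg hk.le (intervalIntegral.integral_nonneg zero_le_one fun z _ ↦ sq_nonneg _)
  rw [show (3 / 2 : ℝ) + 1 = 5 / 2 by norm_num] at layers
  calc
    _ ≤ √Y * √I / (5 / 2) * (3 / 2 * (δ * √δ)) :=
      layers.trans (mul_le_mul_of_nonneg_left (layer_coefficient_le hε hδ hA) (by positivity))
    _ = 3 / 10 * (2 * (√δ * √I) * (δ * √Y)) := by ring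
    _ ≤ 3 / 10 * ((√δ * √I) ^ 2 + (δ * √Y) ^ 2) := by
      gcongr
      exact two_mul_le_add_sq _ _
    _ = 3 / 10 * (δ * I + δ ^ 2 * Y) := by
      rw [mul_pow, mul_pow, Real.sq_sqrt hδ₀.le, Real.sq_sqrt hI, Real.sq_sqrt hY]

theorem mul_integral_sq_pseudoVorticity_le_bulk (h : IsVelocityResponse R k w T)
    (hR : 0 < R) (hk : k ≠ 0) (hε : 0 < ε) (hδ : δ = (81 / 100) * ε ^ 4) (hA : A = δ * √ε / 3)
    (hδR : δ ≤ ((2 : ℝ) ^ 49 * 5 ^ 3 / 3 ^ 30) ^ ((2 : ℝ) / 29) * R ^ (-(40 : ℝ) / 29)) :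
    3 / 10 * (δ ^ 2 * (k * ∫ z in (0 : ℝ)..1, pseudoVorticity k w z ^ 2)) ≤
      3 / 10 * (δ * (k ^ 2 * ∫ z in (0 : ℝ)..1, T z ^ 2)) +
        A * ∫ z in (0 : ℝ)..1, w z * T z := by
  have hδ₀ : 0 < δ := by rw [hδ]; positivity
  have vorticity_le := h.sq_mul_integral_sq_pseudoVorticity_le hk
  have vorticity_eq := h.integral_sq_pseudoVorticity hk
  have vorticity_nonneg : 0 ≤ ∫ z in (0 : ℝ)..1, pseudoVorticity k w z ^ 2 :=
    intervalIntegral.integral_nonneg zero_le_one fun z _ ↦ sq_nonneg _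
  set Z := ∫ z in (0 : ℝ)..1, pseudoVorticity k w z ^ 2
  set J := ∫ z in (0 : ℝ)..1, T z ^ 2
  set K := ∫ z in (0 : ℝ)..1, w z * T z
  refine le_of_mul_le_mul_left ?_ (pow_pos hR 2)
  calc
    R ^ 2 * (3 / 10 * (δ ^ 2 * (k * Z))) = 3 / 10 * δ * Z * (δ * R ^ 2 * k) := by ring
    _ ≤ 3 / 10 * δ * Z * (k ^ 4 + 3 * (10 / 27 * (√ε * R))) := by
      gcongr
      exact mul_sq_mul_le_pow_four_add hR hε hδ hδR k
    _ = 3 / 10 * δ * k ^ 2 * (k ^ 2 * Z) + δ * √ε / 3 * R * Z := by ring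
    _ ≤ 3 / 10 * δ * k ^ 2 * (R ^ 2 * J) + δ * √ε / 3 * R * Z := by gcongr
    _ = R ^ 2 * (3 / 10 * (δ * (k ^ 2 * J)) + A * K) := by
      rw [vorticity_eq, hA]
      ring

end IsVelocityResponse

/-- The stress-free spectral constraint `S_k ≥ 0` holds for the paper's background profile
when `δ = (81/100)ε⁴`, `A = δε^{1/2}/3`, `δ ≤ (2⁴⁹·5³/3³⁰)^{2/29} R^{-40/29}` and
`β ≥ 2√2 δ/9`. -/
theorem stress_free_spectral_constraint
    (R ε δ A β : ℝ) (hR : 0 < R) (hε : ε ∈ Set.Ioc (0:ℝ) (1/3))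
    (hδdef : δ = (81/100) * ε^4)
    (hAdef : A = δ * ε ^ ((1:ℝ)/2) / 3)
    (hδle : δ ≤ ((2:ℝ)^49 * 5^3 / 3^30) ^ ((2:ℝ)/29) * R ^ (-(40:ℝ)/29))
    (hβ : β ≥ 2 * Real.sqrt 2 * δ / 9)
    (τ' : ℝ → ℝ)
    (hτ1 : ∀ z ∈ Set.Ioo (0:ℝ) δ, τ' z = -1 / δ)
    (hτ2 : ∀ z ∈ Set.Ioo δ (1-ε), τ' z = A)
    (hτ3 : ∀ z ∈ Set.Ioo (1-ε) (1:ℝ), τ' z = -((A/ε) * (1-ε-δ) * (1-ε)) / z^2) :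
    ∀ k : ℝ, 0 < k → ∀ w T : ℝ → ℝ, ContDiff ℝ 4 w → ContDiff ℝ 1 T →
      (∀ z ∈ Set.Icc (0:ℝ) 1,
        iteratedDeriv 4 w z - 2 * k^2 * iteratedDeriv 2 w z + k^4 * w z = R * k^2 * T z) →
      w 0 = 0 → w 1 = 0 → iteratedDeriv 2 w 0 = 0 → iteratedDeriv 2 w 1 = 0 →
      T 0 = 0 → T 1 = 0 →
      0 ≤ ∫ z in (0:ℝ)..1,
        (β * (deriv T z)^2 + β * k^2 * (T z)^2 + τ' z * w z * T z) := by
  intro k hk w T hw hT hode hw₀ hw₁ hw₀'' hw₁'' hT₀ hT₁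
  have hflow : IsVelocityResponse R k w T := ⟨hw, hode, hw₀, hw₁, hw₀'', hw₁''⟩
  have hslope : IsProfileSlope δ ε A τ' := ⟨hτ1, hτ2, hτ3⟩
  have hA : A = δ * √ε / 3 := by rw [hAdef, Real.sqrt_eq_rpow]
  have hδ₀ : 0 < δ := by rw [hδdef]; exact mul_pos (by norm_num) (pow_pos hε.1 4)
  have hβδ : 3 / 10 * δ ≤ β := by
    have sqrt_two_ge : 27 / 20 ≤ √2 := Real.le_sqrt_of_sq_le (by norm_num)
    linarith [mul_le_mul_of_nonneg_right sqrt_two_ge hδ₀.le]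
  have layers := (abs_le.1 (hflow.abs_integral_sub_mul_le hslope hk hε hδdef hA hT hT₀ hT₁)).1
  have bulk := hflow.mul_integral_sq_pseudoVorticity_le_bulk hR hk.ne' hε.1 hδdef hA hδle
  rw [hslope.integral_quadraticForm hδ₀ hε.1.le (le_one_sub_of_eq_pow_four hε hδdef) β k
    hw.continuous.continuousOn hT.continuous.continuousOn
    (hT.continuous_deriv le_rfl).continuousOn]
  have thermal : 3 / 10 * δ * ((∫ z in (0 : ℝ)..1, deriv T z ^ 2) +
      k ^ 2 * ∫ z in (0 : ℝ)..1, T z ^ 2) ≤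
      β * ((∫ z in (0 : ℝ)..1, deriv T z ^ 2) + k ^ 2 * ∫ z in (0 : ℝ)..1, T z ^ 2) := by
    have energy_nonneg (f : ℝ → ℝ) : 0 ≤ ∫ z in (0 : ℝ)..1, f z ^ 2 :=
      intervalIntegral.integral_nonneg zero_le_one fun z _ ↦ sq_nonneg _
    exact mul_le_mul_of_nonneg_right hβδ (add_nonneg (energy_nonneg _)
      (mul_nonneg (sq_nonneg k) (energy_nonneg T)))
  linarith
end
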